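/- (Lemma 2.5.) Let (x₀, y₀) ∈ 𝓔, i.e. there exists a nonempty bounded open set Ω ⊆ ℝ² having the ε-cone property for some ε > 0 with x₀ = |Ω|·λ₁(Ω) and y₀ = |Ω|·μ₁(Ω). Then the whole horizontal half-line { (x, y₀) : x ≥ x₀ } is contained in the closure of 𝓔. -/

import Mathlib

open MeasureTheory Filter Set Real RealInnerProductSpace

noncomputable section

abbrev E2 : Type := EuclideanSpace ℝ (Fin 2)

/-- First Dirichlet eigenvalue, variational characterization. -/
noncomputable def dEig1 (Ω : Set E2) : ℝ :=
  sInf { R : ℝ | ∃ u : E2 → ℝ, ContDiff ℝ (⊤ : ℕ∞) u ∧ HasCompactSupport u ∧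
    tsupport u ⊆ Ω ∧ (∫ x, (u x)^2) ≠ 0 ∧
    R = (∫ x, ‖fderiv ℝ u x‖^2) / (∫ x, (u x)^2) }

/-- First nontrivial Neumann eigenvalue, variational characterization. -/
noncomputable def nEig1 (Ω : Set E2) : ℝ :=
  sInf { R : ℝ | ∃ u : E2 → ℝ, ContDiff ℝ (⊤ : ℕ∞) u ∧ (∫ x in Ω, u x) = 0 ∧
    (∫ x in Ω, (u x)^2) ≠ 0 ∧
    R = (∫ x in Ω, ‖fderiv ℝ u x‖^2) / (∫ x in Ω, (u x)^2) }

/-- The cone C(y, ξ, ε). -/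
def coneSet (y ξ : E2) (ε : ℝ) : Set E2 :=
  { z | Real.cos ε * ‖z - y‖ ≤ ⟪z - y, ξ⟫ ∧ 0 < ‖z - y‖ ∧ ‖z - y‖ < ε }

/-- The uniform ε-cone property. -/
def ConeProperty (Ω : Set E2) (ε : ℝ) : Prop :=
  ∀ x ∈ frontier Ω, ∃ ξ : E2, ‖ξ‖ = 1 ∧
    ∀ y ∈ closure Ω ∩ Metric.ball x ε, coneSet y ξ ε ⊆ Ω

/-- The Blaschke–Santaló diagram 𝓔 for general (cone-property, i.e. Lipschitz) open sets. -/
def diagE : Set (ℝ × ℝ) :=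
  { p | ∃ Ω : Set E2, Ω.Nonempty ∧ IsOpen Ω ∧ Bornology.IsBounded Ω ∧
      (∃ ε > 0, ConeProperty Ω ε) ∧
      p = ((volume Ω).toReal * dEig1 Ω, (volume Ω).toReal * nEig1 Ω) }

/-- The open unit disc in the plane. -/
def unitDisc : Set E2 := Metric.ball 0 1



/-! ## Basic facts about the variational eigenvalues -/

def dSet (Ω : Set E2) : Set ℝ :=
  { R : ℝ | ∃ u : E2 → ℝ, ContDiff ℝ (⊤ : ℕ∞) u ∧ HasCompactSupport u ∧
    tsupport u ⊆ Ω ∧ (∫ x, (u x)^2) ≠ 0 ∧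
    R = (∫ x, ‖fderiv ℝ u x‖^2) / (∫ x, (u x)^2) }

def nSet (Ω : Set E2) : Set ℝ :=
  { R : ℝ | ∃ u : E2 → ℝ, ContDiff ℝ (⊤ : ℕ∞) u ∧ (∫ x in Ω, u x) = 0 ∧
    (∫ x in Ω, (u x)^2) ≠ 0 ∧
    R = (∫ x in Ω, ‖fderiv ℝ u x‖^2) / (∫ x in Ω, (u x)^2) }

lemma dEig1_eq (Ω : Set E2) : dEig1 Ω = sInf (dSet Ω) := rfl
lemma nEig1_eq (Ω : Set E2) : nEig1 Ω = sInf (nSet Ω) := rfl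

lemma dSet_nonneg {Ω : Set E2} {R : ℝ} (h : R ∈ dSet Ω) : 0 ≤ R := by
  obtain ⟨u, -, -, -, -, rfl⟩ := h
  positivity

lemma nSet_nonneg {Ω : Set E2} {R : ℝ} (h : R ∈ nSet Ω) : 0 ≤ R := by
  obtain ⟨u, -, -, -, rfl⟩ := h
  positivity

lemma dSet_bdd (Ω : Set E2) : BddBelow (dSet Ω) := ⟨0, fun _ h => dSet_nonneg h⟩
lemma nSet_bdd (Ω : Set E2) : BddBelow (nSet Ω) := ⟨0, fun _ h => nSet_nonneg h⟩

lemma dEig1_nonneg (Ω : Set E2) : 0 ≤ dEig1 Ω := Real.sInf_nonneg fun _ h => dSet_nonneg h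
lemma nEig1_nonneg (Ω : Set E2) : 0 ≤ nEig1 Ω := Real.sInf_nonneg fun _ h => nSet_nonneg h

lemma int_sq_nonneg (u : E2 → ℝ) (μ : Measure E2) : 0 ≤ ∫ x, (u x)^2 ∂μ :=
  integral_nonneg fun _ => sq_nonneg _

lemma dEig1_mul_le {Ω : Set E2} {u : E2 → ℝ} (hu : ContDiff ℝ (⊤ : ℕ∞) u)
    (hc : HasCompactSupport u) (hs : tsupport u ⊆ Ω) :
    dEig1 Ω * (∫ x, (u x)^2) ≤ ∫ x, ‖fderiv ℝ u x‖^2 := by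
  by_cases h0 : (∫ x, (u x)^2) = 0
  · rw [h0, mul_zero]; positivity
  · have hpos : 0 < ∫ x, (u x)^2 := lt_of_le_of_ne (int_sq_nonneg u _) (Ne.symm h0)
    rw [← le_div_iff₀ hpos]
    exact csInf_le (dSet_bdd Ω) ⟨u, hu, hc, hs, h0, rfl⟩

lemma nEig1_mul_le {Ω : Set E2} {u : E2 → ℝ} (hu : ContDiff ℝ (⊤ : ℕ∞) u)
    (hm : ∫ x in Ω, u x = 0) :
    nEig1 Ω * (∫ x in Ω, (u x)^2) ≤ ∫ x in Ω, ‖fderiv ℝ u x‖^2 := by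
  by_cases h0 : (∫ x in Ω, (u x)^2) = 0
  · rw [h0, mul_zero]; positivity
  · have hpos : 0 < ∫ x in Ω, (u x)^2 := lt_of_le_of_ne (int_sq_nonneg u _) (Ne.symm h0)
    rw [← le_div_iff₀ hpos]
    exact csInf_le (nSet_bdd Ω) ⟨u, hu, hm, h0, rfl⟩

/-- Continuous functions are integrable over bounded sets. -/
lemma cont_intOn {Ω : Set E2} (hb : Bornology.IsBounded Ω) {f : E2 → ℝ} (hf : Continuous f) :
    IntegrableOn f Ω := by
  have : IntegrableOn f (closure Ω) :=
    hf.continuousOn.integrableOn_compact (Metric.isCompact_of_isClosed_isBounded isClosed_closure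
      hb.closure)
  exact this.mono_set subset_closure

lemma cd_grad {u : E2 → ℝ} (hu : ContDiff ℝ (⊤ : ℕ∞) u) : Continuous (fderiv ℝ u) :=
  hu.continuous_fderiv (by simp)

lemma cont_gradsq {u : E2 → ℝ} (hu : ContDiff ℝ (⊤ : ℕ∞) u) :
    Continuous (fun x => ‖fderiv ℝ u x‖^2) := (cd_grad hu).norm.pow 2

lemma vol_lt_top {Ω : Set E2} (hb : Bornology.IsBounded Ω) : volume Ω < ⊤ := hb.measure_lt_top

lemma vol_pos {Ω : Set E2} (ho : IsOpen Ω) (hne : Ω.Nonempty) (hb : Bornology.IsBounded Ω) :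
    0 < (volume Ω).toReal :=
  ENNReal.toReal_pos (ho.measure_pos volume hne).ne' (vol_lt_top hb).ne

lemma dSet_nonempty {Ω : Set E2} (ho : IsOpen Ω) (hne : Ω.Nonempty) : (dSet Ω).Nonempty := by
  obtain ⟨p, hp⟩ := hne
  obtain ⟨f, hf1, hf2, hf3, -, hf5⟩ := exists_contDiff_tsupport_subset (E := E2) (n := (⊤ : ℕ∞))
    (ho.mem_nhds hp)
  refine ⟨_, f, hf3, hf2, hf1, ?_, rfl⟩
  have hc : Continuous (fun x => (f x)^2) := hf3.continuous.pow 2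
  have : 0 < ∫ x, (f x)^2 := by
    apply hc.integral_pos_of_hasCompactSupport_nonneg_nonzero (x := p)
    · exact hf2.comp_left (g := fun y : ℝ => y^2) (by simp)
    · intro x; positivity
    · simp [hf5]
  exact this.ne'

/-- Variance identity. -/
lemma int_sub_sq {Ω : Set E2} (hb : Bornology.IsBounded Ω) {u : E2 → ℝ} (hu : Continuous u) (c : ℝ) :
    ∫ x in Ω, (u x - c)^2 = (∫ x in Ω, (u x)^2) - 2 * c * (∫ x in Ω, u x)
      + c^2 * (volume Ω).toReal := by
  have h1 : IntegrableOn (fun x => (u x)^2) Ω := cont_intOn hb (hu.pow 2)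
  have h2 : IntegrableOn (fun x => 2 * c * u x) Ω := cont_intOn hb (hu.const_mul (2 * c))
  have h12 : IntegrableOn (fun x => (u x)^2 - 2 * c * u x) Ω := h1.sub h2
  have h3 : IntegrableOn (fun _ : E2 => c^2) Ω := cont_intOn hb continuous_const
  have : (fun x => (u x - c)^2) = fun x => ((u x)^2 - 2 * c * u x) + c^2 := by
    funext x; ring
  rw [this, integral_add h12 h3, integral_sub h1 h2, integral_const_mul]
  simp [Measure.real]
  ring

lemma int_sub_const {Ω : Set E2} (hb : Bornology.IsBounded Ω) {u : E2 → ℝ} (hu : Continuous u)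
    (c : ℝ) : ∫ x in Ω, (u x - c) = (∫ x in Ω, u x) - c * (volume Ω).toReal := by
  rw [integral_sub (cont_intOn hb hu) (cont_intOn hb continuous_const)]
  simp [Measure.real, mul_comm]

lemma nSet_nonempty {Ω : Set E2} (ho : IsOpen Ω) (hne : Ω.Nonempty) (hb : Bornology.IsBounded Ω) :
    (nSet Ω).Nonempty := by
  have hV := vol_pos ho hne hb
  set c := (∫ x in Ω, x 0) / (volume Ω).toReal with hc
  have hcont : Continuous (fun x : E2 => x 0) := by fun_prop
  have hcd : ContDiff ℝ (⊤ : ℕ∞) (fun x : E2 => x 0 - c) := by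
    fun_prop
  refine ⟨_, fun x => x 0 - c, hcd, ?_, ?_, rfl⟩
  · rw [int_sub_const hb hcont, hc]; field_simp; ring
  · obtain ⟨p, hp⟩ := hne
    obtain ⟨q, hq, hqc⟩ : ∃ q ∈ Ω, q 0 - c ≠ 0 := by
      by_cases h : p 0 - c = 0
      · obtain ⟨e, he, hball⟩ := Metric.isOpen_iff.1 ho p hp
        refine ⟨p + EuclideanSpace.single 0 (e/2), hball ?_, ?_⟩
        · simp [dist_eq_norm, abs_of_pos he, he]
        · have : (p + EuclideanSpace.single 0 (e/2) : E2) 0 = p 0 + e/2 := by simp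
          rw [this]; intro h2; linarith
      · exact ⟨p, hp, h⟩
    intro h0
    have hcc : Continuous (fun x : E2 => (x 0 - c)^2) := by fun_prop
    rw [setIntegral_eq_zero_iff_of_nonneg_ae] at h0
    · have := (ho.inter (isOpen_ne_fun hcc (continuous_const (y := (0:ℝ))))).measure_pos volume
        ⟨q, hq, by simpa using hqc⟩
      have h0' : ∀ᵐ x ∂volume, x ∈ Ω → (x 0 - c)^2 = 0 := by
        rw [← ae_restrict_iff' ho.measurableSet]; exact h0
      rw [ae_iff] at h0'
      refine this.ne' (measure_mono_null ?_ h0')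
      rintro x ⟨hx1, hx2⟩
      simp only [mem_ofPred_eq, Classical.not_imp]
      exact ⟨hx1, hx2⟩
    · exact Eventually.of_forall fun x => sq_nonneg _
    · exact cont_intOn hb hcc

/-- Scaling. -/
lemma fderiv_scale {u : E2 → ℝ} (hu : ContDiff ℝ (⊤ : ℕ∞) u) (s : ℝ) (x : E2) :
    ‖fderiv ℝ (fun y => u (s • y)) x‖^2 = s^2 * ‖fderiv ℝ u (s • x)‖^2 := by
  have hd : DifferentiableAt ℝ u (s • x) := hu.differentiable (by simp) _
  have h1 : HasFDerivAt (fun y => u (s • y))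
      ((fderiv ℝ u (s • x)).comp (s • ContinuousLinearMap.id ℝ E2)) x :=
    hd.hasFDerivAt.comp x ((hasFDerivAt_id x).const_smul s)
  rw [h1.fderiv]
  have : (fderiv ℝ u (s • x)).comp (s • ContinuousLinearMap.id ℝ E2) = s • fderiv ℝ u (s • x) := by
    ext; simp
  rw [this, norm_smul, mul_pow]; simp

open Pointwise in
lemma dEig1_smul_le {Ω : Set E2} (ho : IsOpen Ω) (hne : Ω.Nonempty) {t : ℝ} (ht : 0 < t) :
    dEig1 (t • Ω) ≤ dEig1 Ω / t^2 := by
  rw [le_div_iff₀ (by positivity)]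
  refine le_csInf (dSet_nonempty ho hne) ?_
  rintro R ⟨u, hu, hc, hs, h0, rfl⟩
  rw [← le_div_iff₀ (by positivity)]
  refine csInf_le (dSet_bdd _) ⟨fun y => u (t⁻¹ • y), ?_, ?_, ?_, ?_, ?_⟩
  · exact hu.comp (contDiff_const_smul _)
  · exact hc.comp_smul (inv_ne_zero ht.ne')
  · have := tsupport_comp_subset_preimage u (f := fun y : E2 => t⁻¹ • y) (continuous_const_smul _)
    refine this.trans ?_
    intro y hy
    rw [mem_smul_set_iff_inv_smul_mem₀ ht.ne']
    exact hs hy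
  · rw [Measure.integral_comp_smul volume (fun x => (u x)^2)]
    simp [ht.ne', h0]
  · simp_rw [fderiv_scale hu]
    rw [integral_const_mul, Measure.integral_comp_smul volume (fun x => (u x)^2),
      Measure.integral_comp_smul volume (fun x => ‖fderiv ℝ u x‖^2)]
    simp only [smul_eq_mul]
    have : |((t⁻¹ ^ Module.finrank ℝ E2)⁻¹)| ≠ 0 := by positivity
    field_simp

open Pointwise in
lemma nEig1_smul_le {Ω : Set E2} (ho : IsOpen Ω) (hne : Ω.Nonempty) (hb : Bornology.IsBounded Ω)
    {t : ℝ} (ht : 0 < t) :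
    nEig1 (t • Ω) ≤ nEig1 Ω / t^2 := by
  rw [le_div_iff₀ (by positivity)]
  refine le_csInf (nSet_nonempty ho hne hb) ?_
  rintro R ⟨u, hu, hm, h0, rfl⟩
  rw [← le_div_iff₀ (by positivity)]
  have key : ∀ f : E2 → ℝ, ∫ x in t • Ω, f (t⁻¹ • x) = t^2 * ∫ x in Ω, f x := by
    intro f
    rw [Measure.setIntegral_comp_smul volume f _ (inv_ne_zero ht.ne')]
    rw [smul_smul, inv_mul_cancel₀ ht.ne', one_smul]
    simp
  refine csInf_le (nSet_bdd _) ⟨fun y => u (t⁻¹ • y), ?_, ?_, ?_, ?_⟩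
  · exact hu.comp (contDiff_const_smul _)
  · rw [key, hm, mul_zero]
  · rw [key (fun x => (u x)^2)]
    exact mul_ne_zero (by positivity) h0
  · simp_rw [fderiv_scale hu]
    rw [integral_const_mul, key (fun x => (u x)^2), key (fun x => ‖fderiv ℝ u x‖^2)]
    field_simp

open Pointwise in
lemma dEig1_smul {Ω : Set E2} (ho : IsOpen Ω) (hne : Ω.Nonempty) {t : ℝ} (ht : 0 < t) :
    dEig1 (t • Ω) = dEig1 Ω / t^2 := by
  refine le_antisymm (dEig1_smul_le ho hne ht) ?_
  have := dEig1_smul_le (ho.smul₀ ht.ne') (hne.smul_set (a := t)) (inv_pos.2 ht)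
  rw [smul_smul, inv_mul_cancel₀ ht.ne', one_smul] at this
  rw [div_le_iff₀ (by positivity)]
  calc _ ≤ _ := this
    _ = _ := by field_simp

open Pointwise in
lemma nEig1_smul {Ω : Set E2} (ho : IsOpen Ω) (hne : Ω.Nonempty) (hb : Bornology.IsBounded Ω)
    {t : ℝ} (ht : 0 < t) :
    nEig1 (t • Ω) = nEig1 Ω / t^2 := by
  refine le_antisymm (nEig1_smul_le ho hne hb ht) ?_
  have := nEig1_smul_le (ho.smul₀ ht.ne') (hne.smul_set (a := t)) (hb.smul₀ t) (inv_pos.2 ht)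
  rw [smul_smul, inv_mul_cancel₀ ht.ne', one_smul] at this
  rw [div_le_iff₀ (by positivity)]
  calc _ ≤ _ := this
    _ = _ := by field_simp

open Pointwise in
lemma vol_smul (Ω : Set E2) {t : ℝ} (ht : 0 < t) :
    (volume (t • Ω)).toReal = t^2 * (volume Ω).toReal := by
  rw [Measure.addHaar_smul]
  simp [sq_nonneg]


/-! ## Perforated domains and the cone property -/

def perf (Ω : Set E2) (P : Finset E2) (r : ℝ) : Set E2 := Ω \ ⋃ p ∈ P, Metric.closedBall p r

lemma mem_perf {Ω : Set E2} {P : Finset E2} {r : ℝ} {x : E2} :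
    x ∈ perf Ω P r ↔ x ∈ Ω ∧ ∀ p ∈ P, r < dist x p := by
  simp [perf]

lemma perf_subset (Ω : Set E2) (P : Finset E2) (r : ℝ) : perf Ω P r ⊆ Ω := sdiff_subset

lemma perf_open {Ω : Set E2} (ho : IsOpen Ω) (P : Finset E2) (r : ℝ) : IsOpen (perf Ω P r) :=
  ho.sdiff (isClosed_biUnion_finset fun _ _ => Metric.isClosed_closedBall)

lemma cone_reduce {Ω : Set E2} {ε : ℝ} (hε : 0 < ε) (hC : ConeProperty Ω ε) :
    ∃ ε' > 0, 0 < Real.cos ε' ∧ ConeProperty Ω ε' := by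
  by_cases h : 0 < Real.cos ε
  · exact ⟨ε, hε, h, hC⟩
  · push Not at h
    have h1 : π / 3 ≤ ε := by
      by_contra h2
      push Not at h2
      have : 0 < Real.cos ε := Real.cos_pos_of_mem_Ioo ⟨by linarith [Real.pi_pos], by linarith [Real.pi_pos]⟩
      linarith
    refine ⟨π / 3, by positivity, by rw [Real.cos_pi_div_three]; norm_num, ?_⟩
    intro x hx
    obtain ⟨ξ, hξ, hy⟩ := hC x hx
    refine ⟨ξ, hξ, fun y hyy => Subset.trans ?_ (hy y ⟨hyy.1, Metric.ball_subset_ball h1 hyy.2⟩)⟩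
    rintro z ⟨hz1, hz2, hz3⟩
    refine ⟨?_, hz2, hz3.trans_le h1⟩
    refine le_trans ?_ hz1
    rw [Real.cos_pi_div_three]
    nlinarith

lemma perf_gc {Ω : Set E2} (ho : IsOpen Ω) {ε : ℝ} (hε : 0 < ε) (hcos : 0 < Real.cos ε)
    (hC : ConeProperty Ω ε) (P : Finset E2) {r R : ℝ} (hr : 0 < r) (hrR : r < R)
    (hP : ∀ p ∈ P, Metric.closedBall p R ⊆ Ω)
    (hsep : ∀ p ∈ P, ∀ q ∈ P, p ≠ q → 2 * R < dist p q) :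
    ∃ l > 0, ∀ x ∈ frontier (perf Ω P r), ∃ ξ : E2, ‖ξ‖ = 1 ∧
      ∀ y ∈ closure (perf Ω P r) ∩ Metric.ball x l, ∀ w : E2,
        Real.cos ε * ‖w‖ ≤ ⟪w, ξ⟫ → 0 < ‖w‖ → ‖w‖ < l → y + w ∈ perf Ω P r := by
  obtain ⟨l, hl0, hl1, hl2, hl3⟩ : ∃ l > 0, l ≤ ε ∧ 2 * l ≤ R - r ∧ l ≤ r * Real.cos ε := by
    refine ⟨min ε (min ((R - r) / 2) (r * Real.cos ε)), ?_, ?_, ?_, ?_⟩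
    · refine lt_min hε (lt_min (by linarith) (by positivity))
    · exact min_le_left _ _
    · have : min ε (min ((R - r) / 2) (r * Real.cos ε)) ≤ (R - r) / 2 :=
        (min_le_right _ _).trans (min_le_left _ _)
      linarith
    · exact (min_le_right _ _).trans (min_le_right _ _)
  refine ⟨l, hl0, ?_⟩
  intro x hx
  rw [(perf_open ho P r).frontier_eq] at hx
  obtain ⟨hxc, hxn⟩ := hx
  have hcl : closure (perf Ω P r) ⊆ closure Ω := closure_mono (perf_subset _ _ _)
  have hcl2 : ∀ y ∈ closure (perf Ω P r), ∀ p ∈ P, r ≤ dist y p := by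
    intro y hy p hp
    have hclosed : IsClosed {z : E2 | r ≤ dist z p} :=
      isClosed_le continuous_const (continuous_id.dist continuous_const)
    have : closure (perf Ω P r) ⊆ {z : E2 | r ≤ dist z p} := by
      apply closure_minimal _ hclosed
      intro z hz
      exact ((mem_perf.1 hz).2 p hp).le
    exact this hy
  by_cases hxΩ : x ∈ Ω
  · -- on a circle
    obtain ⟨p, hp, hpx⟩ : ∃ p ∈ P, dist x p ≤ r := by
      by_contra hcon
      push Not at hcon
      exact hxn (mem_perf.2 ⟨hxΩ, hcon⟩)
    have hxp : dist x p = r := le_antisymm hpx (hcl2 x hxc p hp)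
    have hnorm : ‖x - p‖ = r := by rw [← dist_eq_norm]; exact hxp
    refine ⟨r⁻¹ • (x - p), ?_, ?_⟩
    · rw [norm_smul, hnorm, norm_inv, Real.norm_of_nonneg hr.le, inv_mul_cancel₀ hr.ne']
    rintro y ⟨hyc, hyx⟩ w hw hw0 hwl
    have hyp := hcl2 y hyc p hp
    rw [Metric.mem_ball, dist_eq_norm] at hyx
    rw [inner_smul_right, inv_mul_eq_div, le_div_iff₀ hr] at hw
    have hd : dist (y + w) p ≤ R := by
      have : y + w - p = (y - x) + w + (x - p) := by abel
      rw [dist_eq_norm, this]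
      calc _ ≤ ‖y - x‖ + ‖w‖ + ‖x - p‖ := norm_add₃_le
        _ ≤ R := by rw [hnorm]; linarith
    refine mem_perf.2 ⟨hP p hp hd, ?_⟩
    intro q hq
    by_cases hqp : q = p
    · subst hqp
      rw [dist_eq_norm] at hyp ⊢
      have e1 : y + w - q = (y - q) + w := by abel
      have e2 : ‖y + w - q‖^2 = ‖y - q‖^2 + 2 * ⟪y - q, w⟫ + ‖w‖^2 := by
        rw [e1]; exact norm_add_sq_real _ _
      have e3 : ⟪y - q, w⟫ = ⟪w, x - q⟫ + ⟪y - x, w⟫ := by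
        rw [real_inner_comm (x - q) w, ← inner_add_left]
        congr 1; abel
      have e4 : |⟪y - x, w⟫| ≤ ‖y - x‖ * ‖w‖ := abs_real_inner_le_norm _ _
      have e5 := (abs_le.1 e4).1
      have e6 : ‖y - x‖ * ‖w‖ ≤ l * ‖w‖ := by gcongr
      have e7 : l * ‖w‖ ≤ r * Real.cos ε * ‖w‖ := by gcongr
      have e8 : 0 ≤ ⟪y - q, w⟫ := by rw [e3]; nlinarith
      have e9 : r^2 < ‖y + w - q‖^2 := by
        rw [e2]; nlinarith
      exact lt_of_pow_lt_pow_left₀ 2 (norm_nonneg _) e9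
    · have := hsep p hp q hq (Ne.symm hqp)
      have h3 : dist p q ≤ dist (y + w) p + dist (y + w) q := dist_triangle_left _ _ _
      linarith
  · have hxf : x ∈ frontier Ω := by
      rw [ho.frontier_eq]; exact ⟨hcl hxc, hxΩ⟩
    obtain ⟨ξ, hξ, hy⟩ := hC x hxf
    refine ⟨ξ, hξ, ?_⟩
    rintro y ⟨hyc, hyx⟩ w hw hw0 hwl
    refine mem_perf.2 ⟨?_, ?_⟩
    · apply hy y ⟨hcl hyc, Metric.ball_subset_ball hl1 hyx⟩
      refine ⟨?_, ?_, ?_⟩ <;> rw [add_sub_cancel_left]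
      · exact hw
      · exact hw0
      · linarith
    · intro p hp
      by_contra hcon
      push Not at hcon
      apply hxΩ
      apply hP p hp
      rw [Metric.mem_ball] at hyx
      have h1 : dist x p ≤ dist x (y + w) + dist (y + w) p := dist_triangle _ _ _
      have h2 : dist x (y + w) ≤ dist x y + dist y (y + w) := dist_triangle _ _ _
      have h3 : dist y (y + w) = ‖w‖ := by simp
      rw [dist_comm] at hyx
      rw [Metric.mem_closedBall]
      linarith

open Pointwise in
lemma perf_cone {Ω : Set E2} (ho : IsOpen Ω) {ε : ℝ} (hε : 0 < ε)
    (hC : ConeProperty Ω ε) (P : Finset E2) {r R : ℝ} (hr : 0 < r) (hrR : r < R)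
    (hP : ∀ p ∈ P, Metric.closedBall p R ⊆ Ω)
    (hsep : ∀ p ∈ P, ∀ q ∈ P, p ≠ q → 2 * R < dist p q) :
    ∃ t > 0, ∃ ε > 0, ConeProperty ((t : ℝ) • perf Ω P r) ε := by
  obtain ⟨e, he, hcos, hCe⟩ := cone_reduce hε hC
  obtain ⟨l, hl, H⟩ := perf_gc ho he hcos hCe P hr hrR hP hsep
  have ht : 0 < e / l := by positivity
  refine ⟨e / l, ht, e, he, ?_⟩
  set t := e / l with htd
  set S := perf Ω P r
  have hel : e = t * l := by rw [htd]; field_simp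
  intro x hx
  have hx' : x ∈ t • frontier S := by
    have h1 : frontier (t • S) = t • frontier S := by
      rw [((perf_open ho P r).smul₀ ht.ne').frontier_eq, (perf_open ho P r).frontier_eq,
        closure_smul₀, smul_set_sdiff₀ ht.ne']
    rwa [h1] at hx
  obtain ⟨x', hx', rfl⟩ := hx'
  obtain ⟨ξ, hξ, hy⟩ := H x' hx'
  refine ⟨ξ, hξ, ?_⟩
  rintro y ⟨hyc, hyx⟩ z ⟨hz1, hz2, hz3⟩
  rw [closure_smul₀] at hyc
  obtain ⟨y', hy', rfl⟩ := hyc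
  simp only at *
  rw [Metric.mem_ball, dist_smul₀, Real.norm_of_nonneg ht.le, hel] at hyx
  have hyx' : dist y' x' < l := lt_of_mul_lt_mul_left hyx ht.le
  rw [mem_smul_set_iff_inv_smul_mem₀ ht.ne']
  have hw : z - t • y' = t • (t⁻¹ • z - y') := by rw [smul_sub, smul_inv_smul₀ ht.ne']
  rw [hw, norm_smul, Real.norm_of_nonneg ht.le] at hz1 hz2 hz3
  rw [inner_smul_left] at hz1
  have hk := hy y' ⟨hy', hyx'⟩ (t⁻¹ • z - y') ?_ ?_ ?_
  · rwa [add_sub_cancel] at hk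
  · simp only [conj_trivial] at hz1
    have : t * (Real.cos e * ‖t⁻¹ • z - y'‖) ≤ t * ⟪t⁻¹ • z - y', ξ⟫ := by linarith
    exact le_of_mul_le_mul_left this ht
  · exact (mul_pos_iff_of_pos_left ht).1 hz2
  · rw [hel] at hz3; exact lt_of_mul_lt_mul_left hz3 ht.le


/-! ## Integral inequalities in the plane -/

open scoped ENNReal NNReal

lemma ofReal_sq_eq (a : ℝ) : ENNReal.ofReal (a^2) = ‖a‖ₑ^2 := by
  rw [Real.enorm_eq_ofReal_abs, ← ENNReal.ofReal_pow (abs_nonneg a), sq_abs]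

lemma ofReal_norm_sq_eq {F : Type*} [NormedAddCommGroup F] (a : F) :
    ENNReal.ofReal (‖a‖^2) = ‖a‖ₑ^2 := by
  rw [ENNReal.ofReal_pow (norm_nonneg a), ofReal_norm]

/-- One-dimensional Cauchy-Schwarz / fundamental theorem of calculus. -/
lemma oneD_real {f f' : ℝ → ℝ} (hf : ∀ t, HasDerivAt f (f' t) t) (hc : Continuous f') {a b : ℝ}
    (hab : a < b) : (f b - f a)^2 ≤ (b - a) * ∫ t in a..b, (f' t)^2 := by
  have hI : ∫ t in a..b, f' t = f b - f a :=
    intervalIntegral.integral_eq_sub_of_hasDerivAt (fun t _ => hf t) (hc.intervalIntegrable _ _)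
  set c := (f b - f a) / (b - a) with hcdef
  have hba : 0 < b - a := by linarith
  have h0 : 0 ≤ ∫ t in a..b, (f' t - c)^2 :=
    intervalIntegral.integral_nonneg hab.le fun t _ => sq_nonneg _
  have h1 : ∫ t in a..b, (f' t - c)^2
      = (∫ t in a..b, (f' t)^2) - 2 * c * (f b - f a) + c^2 * (b - a) := by
    have e : (fun t => (f' t - c)^2) = fun t => ((f' t)^2 - 2 * c * f' t) + c^2 := by
      funext t; ring
    rw [e, intervalIntegral.integral_add, intervalIntegral.integral_sub,
      intervalIntegral.integral_const_mul, hI, intervalIntegral.integral_const]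
    · simp; ring
    all_goals exact Continuous.intervalIntegrable (by fun_prop) _ _
  rw [h1] at h0
  have h2 : (b - a) * (2 * c * (f b - f a) - c^2 * (b - a)) = (f b - f a)^2 := by
    rw [hcdef]; field_simp; ring
  rw [← h2]
  apply mul_le_mul_of_nonneg_left _ hba.le
  linarith

lemma oneD {f f' : ℝ → ℝ} (hf : ∀ t, HasDerivAt f (f' t) t) (hc : Continuous f') {a b : ℝ}
    (hab : a ≤ b) :
    ‖f b - f a‖ₑ^2 ≤ ENNReal.ofReal (b - a) * ∫⁻ t in Ioo a b, ‖f' t‖ₑ^2 := by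
  rcases hab.eq_or_lt with rfl | hab
  · simp
  have h1 := oneD_real hf hc hab
  have h2 := ENNReal.ofReal_le_ofReal h1
  rw [ENNReal.ofReal_mul (by linarith), ofReal_sq_eq] at h2
  refine h2.trans (mul_le_mul_right ?_ _)
  rw [intervalIntegral.integral_of_le hab.le, integral_Ioc_eq_integral_Ioo,
    ofReal_integral_eq_lintegral_ofReal]
  · simp_rw [ofReal_sq_eq]; exact le_rfl
  · have hi : IntegrableOn (fun t => (f' t)^2) (Icc a b) :=
      (hc.pow 2).continuousOn.integrableOn_compact isCompact_Icc
    exact hi.mono_set Ioo_subset_Icc_self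
  · exact Eventually.of_forall fun t => sq_nonneg _

lemma cauchy_schwarz_sq {α : Type*} [MeasurableSpace α] (μ : Measure α) {f g : α → ℝ≥0∞}
    (hf : AEMeasurable f μ) (hg : AEMeasurable g μ) :
    (∫⁻ x, f x * g x ∂μ)^2 ≤ (∫⁻ x, (f x)^2 ∂μ) * ∫⁻ x, (g x)^2 ∂μ := by
  have h := ENNReal.lintegral_mul_le_Lp_mul_Lq μ (p := 2) (q := 2)
    (by constructor <;> norm_num) hf hg
  have h2 : (∫⁻ x, f x * g x ∂μ)^2 ≤ ((∫⁻ x, (f x)^(2:ℝ) ∂μ)^(1/(2:ℝ))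
      * (∫⁻ x, (g x)^(2:ℝ) ∂μ)^(1/(2:ℝ)))^2 := pow_le_pow_left' h 2
  refine h2.trans (le_of_eq ?_)
  rw [mul_pow, ← ENNReal.rpow_natCast, ← ENNReal.rpow_natCast, ← ENNReal.rpow_mul,
    ← ENNReal.rpow_mul]
  norm_num

lemma meas_enorm_grad {u : E2 → ℝ} (hu : ContDiff ℝ (⊤ : ℕ∞) u) :
    Measurable (fun x => ‖fderiv ℝ u x‖ₑ) := (cd_grad hu).enorm.measurable

lemma meas_enorm {u : E2 → ℝ} (hu : ContDiff ℝ (⊤ : ℕ∞) u) :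
    Measurable (fun x => ‖u x‖ₑ) := hu.continuous.enorm.measurable

/-- Derivative along a curve. -/
lemma hasDerivAt_line {u : E2 → ℝ} (hu : ContDiff ℝ (⊤ : ℕ∞) u) (x h : E2) (t : ℝ) :
    HasDerivAt (fun t : ℝ => u (x + t • h)) (fderiv ℝ u (x + t • h) h) t := by
  have h1 : HasDerivAt (fun t : ℝ => x + t • h) h t := by
    simpa using ((hasDerivAt_id t).smul_const h).const_add x
  exact ((hu.differentiable (by simp) _).hasFDerivAt).comp_hasDerivAt t h1

lemma enorm_clm_le (L : E2 →L[ℝ] ℝ) (h : E2) : ‖L h‖ₑ ≤ ‖L‖ₑ * ‖h‖ₑ := L.le_opENorm h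

lemma translation_est {u : E2 → ℝ} (hu : ContDiff ℝ (⊤ : ℕ∞) u) (h : E2) :
    ∫⁻ x, ‖u (x + h) - u x‖ₑ^2 ≤ ‖h‖ₑ^2 * ∫⁻ x, ‖fderiv ℝ u x‖ₑ^2 := by
  have hcg := cd_grad hu
  have hpt : ∀ x, ‖u (x + h) - u x‖ₑ^2 ≤
      ∫⁻ t in Ioo (0:ℝ) 1, ‖h‖ₑ^2 * ‖fderiv ℝ u (x + t • h)‖ₑ^2 := by
    intro x
    have := oneD (f := fun t : ℝ => u (x + t • h)) (hasDerivAt_line hu x h)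
      ((hcg.comp (by fun_prop)).clm_apply continuous_const) zero_le_one
    simp only [one_smul, zero_smul, add_zero, sub_zero, ENNReal.ofReal_one, one_mul] at this
    refine this.trans (lintegral_mono fun t => ?_)
    rw [← mul_pow, mul_comm]
    gcongr
    exact enorm_clm_le _ _
  calc ∫⁻ x, ‖u (x + h) - u x‖ₑ^2
      ≤ ∫⁻ x, ∫⁻ t in Ioo (0:ℝ) 1, ‖h‖ₑ^2 * ‖fderiv ℝ u (x + t • h)‖ₑ^2 := lintegral_mono hpt
    _ = ∫⁻ t in Ioo (0:ℝ) 1, ∫⁻ x, ‖h‖ₑ^2 * ‖fderiv ℝ u (x + t • h)‖ₑ^2 := by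
        apply lintegral_lintegral_swap
        apply Measurable.aemeasurable
        have : Continuous (fun z : E2 × ℝ => ‖fderiv ℝ u (z.1 + z.2 • h)‖ₑ) :=
          (hcg.comp (by fun_prop)).enorm
        exact (this.measurable.pow_const 2).const_mul _
    _ = ∫⁻ t in Ioo (0:ℝ) 1, ‖h‖ₑ^2 * ∫⁻ x, ‖fderiv ℝ u x‖ₑ^2 := by
        congr 1; funext t
        rw [lintegral_const_mul]
        · congr 1
          exact lintegral_add_right_eq_self (fun x => ‖fderiv ℝ u x‖ₑ^2) (t • h)
        · exact ((hcg.comp (by fun_prop)).enorm.measurable.pow_const 2)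
    _ = _ := by simp

lemma vol_ball_ratio {p q : E2} {r : ℝ} (hr : 0 ≤ r) {s : ℝ} (hs : 0 < s) :
    volume (Metric.closedBall p r) = ENNReal.ofReal ((r / s)^2) * volume (Metric.closedBall q s) := by
  rw [Measure.addHaar_closedBall _ _ hr, Measure.addHaar_closedBall _ _ hs.le, ← mul_assoc,
    ← ENNReal.ofReal_mul (by positivity)]
  congr 2
  simp
  field_simp

lemma good_part {u : E2 → ℝ} (hu : ContDiff ℝ (⊤ : ℕ∞) u) {G : Set E2}
    {P : Finset E2} {r R : ℝ} (hr : 0 < r) (hrR : r ≤ R)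
    (hG : ∀ x ∈ G, ∃ p ∈ P, dist x p ≤ 2 * R)
    (hu0 : ∀ p ∈ P, ∀ x ∈ Metric.closedBall p r, u x = 0) :
    ∫⁻ x in G, ‖u x‖ₑ^2 ≤ ENNReal.ofReal (81 * R^4 / r^2) * ∫⁻ x, ‖fderiv ℝ u x‖ₑ^2 := by
  set E := ∫⁻ x, ‖fderiv ℝ u x‖ₑ^2 with hE
  set B := Metric.closedBall (0 : E2) (3 * R) with hB
  set v := volume (Metric.closedBall (0 : E2) r) with hv
  have hv0 : v ≠ 0 := (Metric.measure_closedBall_pos _ _ hr).ne'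
  have hvt : v ≠ ⊤ := measure_closedBall_lt_top.ne
  have hR : 0 < R := hr.trans_le hrR
  have hlow : ∀ x ∈ G, v * ‖u x‖ₑ^2 ≤ ∫⁻ h in B, ‖u (x + h) - u x‖ₑ^2 := by
    intro x hx
    obtain ⟨p, hp, hpx⟩ := hG x hx
    have hsub : Metric.closedBall (p - x) r ⊆ B := by
      intro h hh
      rw [Metric.mem_closedBall, dist_eq_norm] at hh
      rw [hB, Metric.mem_closedBall, dist_zero_right]
      have : h = (h - (p - x)) + (p - x) := by abel
      rw [this]
      rw [dist_comm, dist_eq_norm] at hpx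
      exact (norm_add_le _ _).trans (by linarith)
    calc v * ‖u x‖ₑ^2 = ∫⁻ h in Metric.closedBall (p - x) r, ‖u x‖ₑ^2 := by
          rw [lintegral_const, Measure.restrict_apply_univ, mul_comm, hv,
            Measure.addHaar_closedBall_center volume (p - x)]
      _ = ∫⁻ h in Metric.closedBall (p - x) r, ‖u (x + h) - u x‖ₑ^2 := by
          apply setLIntegral_congr_fun measurableSet_closedBall
          intro h hh
          have : u (x + h) = 0 := by
            apply hu0 p hp
            rw [Metric.mem_closedBall, dist_eq_norm] at hh ⊢
            convert hh using 2; abel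
          simp [this]
      _ ≤ _ := lintegral_mono_set hsub
  have hmeas : Measurable (fun z : E2 × E2 => ‖u (z.1 + z.2) - u z.1‖ₑ^2) := by
    have : Continuous (fun z : E2 × E2 => ‖u (z.1 + z.2) - u z.1‖ₑ) :=
      ((hu.continuous.comp (by fun_prop)).sub (hu.continuous.comp (by fun_prop))).enorm
    exact this.measurable.pow_const 2
  have h1 : v * ∫⁻ x in G, ‖u x‖ₑ^2 ≤ volume B * (ENNReal.ofReal ((3 * R)^2) * E) := by
    calc v * ∫⁻ x in G, ‖u x‖ₑ^2 = ∫⁻ x in G, v * ‖u x‖ₑ^2 :=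
          (lintegral_const_mul _ ((meas_enorm hu).pow_const 2)).symm
      _ ≤ ∫⁻ x in G, ∫⁻ h in B, ‖u (x + h) - u x‖ₑ^2 :=
          setLIntegral_mono (hmeas.lintegral_prod_right') hlow
      _ ≤ ∫⁻ x, ∫⁻ h in B, ‖u (x + h) - u x‖ₑ^2 := setLIntegral_le_lintegral _ _
      _ = ∫⁻ h in B, ∫⁻ x, ‖u (x + h) - u x‖ₑ^2 := lintegral_lintegral_swap hmeas.aemeasurable
      _ ≤ ∫⁻ h in B, ENNReal.ofReal ((3 * R)^2) * E := by
          apply setLIntegral_mono measurable_const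
          intro h hh
          refine (translation_est hu h).trans ?_
          rw [hB, Metric.mem_closedBall, dist_zero_right] at hh
          rw [← ofReal_norm_sq_eq]
          gcongr
      _ = _ := by rw [lintegral_const, Measure.restrict_apply_univ, mul_comm]
  rw [hB, vol_ball_ratio (p := 0) (q := 0) (r := 3 * R) (by positivity) hr, ← hv] at h1
  rw [← ENNReal.mul_le_mul_iff_right hv0 hvt]
  refine h1.trans (le_of_eq ?_)
  rw [mul_comm _ v, mul_assoc, ← mul_assoc (ENNReal.ofReal _) (ENNReal.ofReal _),
    ← ENNReal.ofReal_mul (by positivity)]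
  congr 3
  field_simp; ring

lemma bad_part : ∃ C : ℝ≥0, ∀ (u : E2 → ℝ), ContDiff ℝ (⊤ : ℕ∞) u → HasCompactSupport u →
    ∀ T : Set E2, 
    (∫⁻ x in T, ‖u x‖ₑ^2)^2 ≤ C * volume T * (∫⁻ x, ‖u x‖ₑ^2) * ∫⁻ x, ‖fderiv ℝ u x‖ₑ^2 := by
  have hp : Real.HolderConjugate (Module.finrank ℝ E2) 2 := by
    simp only [finrank_euclideanSpace, Fintype.card_fin]
    constructor <;> norm_num
  set C := lintegralPowLePowLIntegralFDerivConst (volume : Measure E2) 2 with hC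
  refine ⟨4 * C, fun u hu hc T => ?_⟩
  have h1 : (∫⁻ x in T, ‖u x‖ₑ^2)^2 ≤ volume T * ∫⁻ x, (‖u x‖ₑ^2)^2 := by
    have := cauchy_schwarz_sq (volume.restrict T) (f := fun _ => 1) (g := fun x => ‖u x‖ₑ^2)
      aemeasurable_const ((meas_enorm hu).pow_const 2).aemeasurable
    simp only [one_mul, one_pow, lintegral_const, Measure.restrict_apply_univ] at this
    exact this.trans (mul_le_mul_right (setLIntegral_le_lintegral _ _) _)
  have hsq : ContDiff ℝ (⊤ : ℕ∞) (fun x => (u x)^2) := hu.pow 2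
  have h2 := lintegral_pow_le_pow_lintegral_fderiv (volume : Measure E2)
    (u := fun x => (u x)^2) (hsq.of_le (by simp)) (hc.comp_left (g := fun y : ℝ => y^2) (by simp)) hp
  have h3 : ∀ x, ‖fderiv ℝ (fun x => (u x)^2) x‖ₑ = 2 * (‖u x‖ₑ * ‖fderiv ℝ u x‖ₑ) := by
    intro x
    have hd := (hu.differentiable (by simp) x).hasFDerivAt.pow 2
    rw [hd.fderiv]
    simp [enorm_smul, enorm_mul, mul_assoc]
    congr 1
    rw [← ofReal_norm]; norm_num
  simp_rw [h3] at h2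
  have hmm : Measurable (fun x => ‖u x‖ₑ * ‖fderiv ℝ u x‖ₑ) :=
    (meas_enorm hu).mul (meas_enorm_grad hu)
  rw [lintegral_const_mul _ hmm] at h2
  have h4 := cauchy_schwarz_sq (volume : Measure E2) (meas_enorm hu).aemeasurable
    (meas_enorm_grad hu).aemeasurable
  have h5 : ∀ x, ‖(u x)^2‖ₑ ^ (2:ℝ) = (‖u x‖ₑ^2)^2 := by
    intro x; rw [enorm_pow]; exact_mod_cast ENNReal.rpow_natCast _ 2
  simp_rw [h5] at h2
  have h6 : ∀ a : ℝ≥0∞, a ^ (2:ℝ) = a^2 := fun a => by exact_mod_cast ENNReal.rpow_natCast a 2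
  rw [h6, mul_pow] at h2
  calc _ ≤ _ := h1
    _ ≤ volume T * (C * (2^2 * ((∫⁻ x, ‖u x‖ₑ^2) * ∫⁻ x, ‖fderiv ℝ u x‖ₑ^2))) := by
      gcongr
      exact h2.trans (by gcongr)
    _ = _ := by
      push_cast
      ring


/-! ## Packing, and the Dirichlet eigenvalue becomes large -/

def GoodPack (Ω : Set E2) (P : Finset E2) (R : ℝ) : Prop :=
  (∀ p ∈ P, Metric.closedBall p R ⊆ Ω) ∧ (∀ p ∈ P, ∀ q ∈ P, p ≠ q → 2 * R < dist p q) ∧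
    ∀ x, Metric.closedBall x R ⊆ Ω → ∃ p ∈ P, dist x p ≤ 2 * R

lemma exists_goodPack {Ω : Set E2} (hb : Bornology.IsBounded Ω) {R : ℝ} (hR : 0 < R) :
    ∃ P : Finset E2, GoodPack Ω P R := by
  set A : Set E2 := {x | Metric.closedBall x R ⊆ Ω} with hA
  have hAb : Bornology.IsBounded A :=
    hb.subset fun x hx => hx (Metric.mem_closedBall_self hR.le)
  lift R to ℝ≥0 using hR.le
  have hR' : R ≠ 0 := by
    intro h; simp [h] at hR
  have hfin : Metric.packingNumber (2 * R) A ≠ ⊤ := by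
    have h1 := Metric.packingNumber_two_mul_le_externalCoveringNumber R A
    obtain ⟨N, -, hNf, hN⟩ := Metric.exists_finite_isCover_of_totallyBounded hR'
      ((Metric.isCompact_of_isClosed_isBounded isClosed_closure
      hAb.closure).totallyBounded.subset subset_closure : TotallyBounded A)
    have h2 := hN.externalCoveringNumber_le_encard
    exact ((h1.trans h2).trans_lt (Set.encard_lt_top_iff.2 hNf)).ne
  set S := Metric.maximalSeparatedSet (2 * R) A with hS
  have hSf : S.Finite := by
    rw [← Set.encard_ne_top_iff, Metric.encard_maximalSeparatedSet hfin]; exact hfin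
  refine ⟨hSf.toFinset, ?_, ?_, ?_⟩
  · intro p hp
    exact Metric.maximalSeparatedSet_subset (by simpa using hp)
  · intro p hp q hq hpq
    have : ((2 * R : ℝ≥0) : ℝ≥0∞) < edist p q := Metric.isSeparated_maximalSeparatedSet (ε := 2 * R) (A := A) (by simpa using hp)
      (by simpa using hq) hpq
    rw [edist_dist, ENNReal.lt_ofReal_iff_toReal_lt ENNReal.coe_ne_top] at this
    simpa using this
  · intro x hx
    obtain ⟨p, hp, hpx⟩ := Metric.isCover_maximalSeparatedSet hfin (show x ∈ A from hx)
    refine ⟨p, by simpa using hp, ?_⟩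
    have h4 : edist x p ≤ (2 * R : ℝ≥0) := hpx
    rw [edist_le_coe] at h4
    have : (nndist x p : ℝ) ≤ (2 * R : ℝ≥0) := by exact_mod_cast h4
    simpa using this

lemma small_collar {Ω : Set E2} (ho : IsOpen Ω) (hb : Bornology.IsBounded Ω) {η : ℝ} (hη : 0 < η) :
    ∃ R₀ > 0, ∀ R, 0 < R → R ≤ R₀ →
      volume (Ω \ {x | Metric.closedBall x R ⊆ Ω}) ≤ ENNReal.ofReal η := by
  have hfin : volume Ω ≠ ⊤ := (vol_lt_top hb).ne
  have : IsFiniteMeasure (volume.restrict Ω) := ⟨by simpa using vol_lt_top hb⟩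
  have h := tendsto_measure_cthickening_of_isClosed (μ := volume.restrict Ω) (s := Ωᶜ)
    ⟨1, one_pos, measure_ne_top _ _⟩ ho.isClosed_compl
  have h0 : (volume.restrict Ω) Ωᶜ = 0 := by
    rw [Measure.restrict_apply ho.measurableSet.compl]; simp
  rw [h0] at h
  have h1 := h.eventually (gt_mem_nhds (show (0:ℝ≥0∞) < ENNReal.ofReal η by simpa using hη))
  obtain ⟨R₀, hR₀, h2⟩ := Metric.eventually_nhds_iff.1 h1
  refine ⟨R₀ / 2, by positivity, fun R hR hRR => ?_⟩
  have h3 := h2 (y := R) (by rw [dist_zero_right, Real.norm_eq_abs, abs_of_pos hR]; linarith)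
  rw [Measure.restrict_apply Metric.isClosed_cthickening.measurableSet] at h3
  refine le_trans (measure_mono ?_) h3.le
  rintro x ⟨hx1, hx2⟩
  refine ⟨?_, hx1⟩
  simp only [Set.mem_ofPred_eq, Set.not_subset] at hx2
  obtain ⟨y, hy1, hy2⟩ := hx2
  exact Metric.mem_cthickening_of_dist_le x y R _ hy2 (by rw [dist_comm]; exact hy1)

lemma int_sq_eq_lint {u : E2 → ℝ} (hu : Continuous u) (μ : Measure E2) :
    ∫ x, (u x)^2 ∂μ = (∫⁻ x, ‖u x‖ₑ^2 ∂μ).toReal := by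
  rw [integral_eq_lintegral_of_nonneg_ae (Eventually.of_forall fun x => sq_nonneg _)
    (hu.pow 2).aestronglyMeasurable]
  simp_rw [ofReal_sq_eq]

lemma int_normsq_eq_lint {F : Type*} [NormedAddCommGroup F] {u : E2 → F} (hu : Continuous u)
    (μ : Measure E2) :
    ∫ x, ‖u x‖^2 ∂μ = (∫⁻ x, ‖u x‖ₑ^2 ∂μ).toReal := by
  rw [integral_eq_lintegral_of_nonneg_ae (Eventually.of_forall fun x => sq_nonneg _)
    (hu.norm.pow 2).aestronglyMeasurable]
  simp_rw [ofReal_norm_sq_eq]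

lemma lint_normsq_ne_top {F : Type*} [NormedAddCommGroup F] {u : E2 → F} (hu : Continuous u)
    (hc : HasCompactSupport u) : ∫⁻ x, ‖u x‖ₑ^2 ≠ ⊤ := by
  have hc2 : HasCompactSupport (fun x => ‖u x‖^2) := by
    apply hc.mono
    intro x hx h0
    rw [Function.mem_support] at hx
    exact hx (by simp [h0])
  have hcont : Continuous (fun x => ‖u x‖^2) := hu.norm.pow 2
  have h : Integrable (fun x => ‖u x‖^2) := hcont.integrable_of_hasCompactSupport hc2
  have h2 := h.lintegral_lt_top
  simp_rw [ofReal_norm_sq_eq] at h2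
  exact h2.ne

lemma lam_large {Ω : Set E2} (ho : IsOpen Ω) (hb : Bornology.IsBounded Ω) {κ : ℝ} (hκ : 0 < κ)
    (hκ1 : κ ≤ 1) (M : ℝ) : ∃ R₀ > 0, ∀ R, 0 < R → R ≤ R₀ → ∀ P : Finset E2, GoodPack Ω P R →
      (perf Ω P (κ * R)).Nonempty → M ≤ dEig1 (perf Ω P (κ * R)) := by
  obtain ⟨C, hC⟩ := bad_part
  set M' := max M 1 with hM'
  have hM'1 : 1 ≤ M' := le_max_right _ _
  have hCn : (0:ℝ) ≤ C := C.2
  set τ := 1 / (16 * (C + 1) * M') with hτ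
  have hτ0 : 0 < τ := by positivity
  obtain ⟨R₁, hR₁, hcol⟩ := small_collar ho hb hτ0
  refine ⟨min R₁ (κ / (13 * M')), by positivity, fun R hR hRR P hP hne => ?_⟩
  refine (le_max_left M 1).trans ?_
  rw [← hM', dEig1_eq]
  refine le_csInf (dSet_nonempty (perf_open ho _ _) hne) ?_
  rintro q ⟨u, hu, hc, hs, h0, rfl⟩
  have hW : 0 < ∫ x, (u x)^2 := lt_of_le_of_ne (int_sq_nonneg u _) (Ne.symm h0)
  rw [le_div_iff₀ hW]
  set G := {x | Metric.closedBall x R ⊆ Ω} with hG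
  have hg := good_part hu (G := G) (P := P) (r := κ * R) (R := R) (by positivity)
    (by nlinarith) (fun x hx => hP.2.2 x hx) (by
      intro p hp x hx
      by_contra h
      have := (mem_perf.1 (hs (subset_tsupport _ h))).2 p hp
      rw [Metric.mem_closedBall] at hx
      linarith)
  have hbd := hC u hu hc (Ω \ G)
  have hWt := lint_normsq_ne_top hu.continuous hc
  have hEt := lint_normsq_ne_top (cd_grad hu) (hc.fderiv ℝ)
  have hT := hcol R hR (hRR.trans (min_le_left _ _))
  have hsum : ∫⁻ x, ‖u x‖ₑ^2 ≤ (∫⁻ x in G, ‖u x‖ₑ^2) + ∫⁻ x in Ω \ G, ‖u x‖ₑ^2 := by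
    have h1 : ∫⁻ x, ‖u x‖ₑ^2 = ∫⁻ x in (G ∪ Ω \ G), ‖u x‖ₑ^2 := by
      rw [setLIntegral_eq_of_support_subset]
      intro x hx
      have : u x ≠ 0 := by
        intro h; simp [h] at hx
      have hxΩ := (mem_perf.1 (hs (subset_tsupport _ this))).1
      by_cases hxG : x ∈ G
      · exact Or.inl hxG
      · exact Or.inr ⟨hxΩ, hxG⟩
    rw [h1]
    exact lintegral_union_le _ _ _
  rw [int_sq_eq_lint hu.continuous, int_normsq_eq_lint (cd_grad hu)]
  rw [int_sq_eq_lint hu.continuous] at hW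
  have hgt : ∫⁻ x in G, ‖u x‖ₑ^2 ≠ ⊤ := ne_top_of_le_ne_top hWt (setLIntegral_le_lintegral _ _)
  have hbt : ∫⁻ x in Ω \ G, ‖u x‖ₑ^2 ≠ ⊤ := ne_top_of_le_ne_top hWt (setLIntegral_le_lintegral _ _)
  have hbd2 : (∫⁻ x in Ω \ G, ‖u x‖ₑ^2)^2 ≤
      C * ENNReal.ofReal τ * (∫⁻ x, ‖u x‖ₑ^2) * ∫⁻ x, ‖fderiv ℝ u x‖ₑ^2 :=
    hbd.trans (by gcongr)
  have r1 := ENNReal.toReal_mono (by finiteness) hsum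
  have r2 := ENNReal.toReal_mono (by finiteness) hg
  have r3 := ENNReal.toReal_mono (by finiteness) hbd2
  rw [ENNReal.toReal_add hgt hbt] at r1
  rw [ENNReal.toReal_mul, ENNReal.toReal_ofReal (by positivity)] at r2
  rw [ENNReal.toReal_mul, ENNReal.toReal_mul, ENNReal.toReal_mul, ENNReal.toReal_ofReal hτ0.le,
    ENNReal.toReal_pow, ENNReal.coe_toReal] at r3
  set W := (∫⁻ x, ‖u x‖ₑ^2).toReal
  set E := (∫⁻ x, ‖fderiv ℝ u x‖ₑ^2).toReal
  set g := (∫⁻ x in G, ‖u x‖ₑ^2).toReal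
  set b := (∫⁻ x in Ω \ G, ‖u x‖ₑ^2).toReal
  by_contra hcon
  push Not at hcon
  have hE0 : 0 ≤ E := ENNReal.toReal_nonneg
  have ha : 81 * R^4 / (κ * R)^2 * M' ≤ 1/2 := by
    have h5 : R ≤ κ / (13 * M') := hRR.trans (min_le_right _ _)
    have e : 81 * R^4 / (κ * R)^2 * M' = 81 * (R / κ)^2 * M' := by field_simp
    rw [e]
    have h6 : R / κ ≤ 1 / (13 * M') := by
      rw [div_le_iff₀ hκ]; rw [one_div, inv_mul_eq_div]; exact h5
    calc 81 * (R / κ)^2 * M' ≤ 81 * (1 / (13 * M'))^2 * M' := by gcongr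
      _ = 81 / 169 * (1 / M') := by field_simp; norm_num
      _ ≤ 1/2 := by
        have : 1 / M' ≤ 1 := by rw [div_le_one (by linarith)]; exact hM'1
        linarith
  have ha2 : C * τ * M' ≤ 1/16 := by
    rw [hτ]
    have : C * (1 / (16 * (C + 1) * M')) * M' = (C / (C + 1) : ℝ) / 16 := by field_simp
    rw [this]
    have : (C / (C + 1) : ℝ) ≤ 1 := by rw [div_le_one (by linarith)]; linarith
    linarith
  have hg2 : g ≤ W / 2 := by
    calc g ≤ _ := r2
      _ ≤ 81 * R^4 / (κ * R)^2 * (M' * W) := by gcongr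
      _ = (81 * R^4 / (κ * R)^2 * M') * W := by ring
      _ ≤ 1/2 * W := by gcongr
      _ = _ := by ring
  have hb2 : b^2 ≤ (W / 4)^2 := by
    calc b^2 ≤ _ := r3
      _ ≤ C * τ * W * (M' * W) := by gcongr
      _ = (C * τ * M') * W^2 := by ring
      _ ≤ 1/16 * W^2 := by gcongr
      _ = _ := by ring
  have hb3 : b ≤ W / 4 := le_of_sq_le_sq hb2 (by positivity)
  linarith


/-! ## Neumann upper bound under removal of a small set -/

lemma neu_upper {Ω : Set E2} (ho : IsOpen Ω) (hne : Ω.Nonempty) (hb : Bornology.IsBounded Ω)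
    {δ : ℝ} (hδ : 0 < δ) : ∃ η > 0, ∀ Ω' : Set E2, IsOpen Ω' → Ω' ⊆ Ω →
      (volume (Ω \ Ω')).toReal ≤ η → nEig1 Ω' ≤ nEig1 Ω + δ := by
  obtain ⟨q, ⟨u, hu, hm, h0, rfl⟩, hq⟩ := exists_lt_of_csInf_lt (nSet_nonempty ho hne hb)
    (show sInf (nSet Ω) < nEig1 Ω + δ / 2 by rw [← nEig1_eq]; linarith)
  have hV := vol_pos ho hne hb
  set V := (volume Ω).toReal with hVd
  set W := ∫ x in Ω, (u x)^2 with hWd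
  set E := ∫ x in Ω, ‖fderiv ℝ u x‖^2 with hEd
  have hW : 0 < W := lt_of_le_of_ne (int_sq_nonneg u _) (Ne.symm h0)
  have hE : 0 ≤ E := integral_nonneg fun _ => sq_nonneg _
  obtain ⟨M, hM⟩ : ∃ M, ∀ x ∈ Ω, |u x| ≤ M := by
    obtain ⟨M, hM⟩ := (Metric.isCompact_of_isClosed_isBounded isClosed_closure
      hb.closure).exists_bound_of_continuousOn hu.continuous.continuousOn
    exact ⟨M, fun x hx => hM x (subset_closure hx)⟩
  have hM0 : 0 ≤ M := by
    obtain ⟨x, hx⟩ := hne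
    exact (abs_nonneg _).trans (hM x hx)
  set Q := E / W + δ / 2 with hQ
  have hQ0 : 0 < Q := by positivity
  refine ⟨min (min (V / 2) (W / (4 * (M^2 + 1)))) (δ * W / (4 * (M^2 + 1) * Q)), by positivity, ?_⟩
  intro Ω' ho' hsub hvol
  set η := (volume (Ω \ Ω')).toReal with hη
  have hη0 : 0 ≤ η := ENNReal.toReal_nonneg
  have hb' := hb.subset hsub
  have hbd : Bornology.IsBounded (Ω \ Ω') := hb.subset sdiff_subset
  have hVs : (volume Ω').toReal = V - η := by
    have := measureReal_sdiff (μ := volume) hsub ho'.measurableSet (vol_lt_top hb).ne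
    simp only [Measure.real] at this
    rw [hη, this]; ring
  have hη1 : η ≤ V / 2 := hvol.trans ((min_le_left _ _).trans (min_le_left _ _))
  have hη3 : η ≤ W / (4 * (M^2 + 1)) := hvol.trans ((min_le_left _ _).trans (min_le_right _ _))
  have hη2 : η ≤ δ * W / (4 * (M^2 + 1) * Q) := hvol.trans (min_le_right _ _)
  set V' := (volume Ω').toReal with hV'
  have hV'0 : 0 < V' := by rw [hVs]; linarith
  have hsplit : ∀ f : E2 → ℝ, Continuous f →
      ∫ x in Ω, f x = (∫ x in Ω', f x) + ∫ x in Ω \ Ω', f x := by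
    intro f hf
    rw [setIntegral_sdiff ho'.measurableSet (cont_intOn hb hf) hsub]; ring
  have e1 := hsplit u hu.continuous
  have e2 := hsplit (fun x => (u x)^2) (hu.continuous.pow 2)
  have e3 := hsplit (fun x => ‖fderiv ℝ u x‖^2) (cont_gradsq hu)
  have b1 : |∫ x in Ω \ Ω', u x| ≤ M * η := by
    have := norm_setIntegral_le_of_norm_le_const (f := u) (C := M) (vol_lt_top hbd)
      (fun x hx => hM x hx.1)
    exact this
  have b2 : ∫ x in Ω \ Ω', (u x)^2 ≤ M^2 * η := by
    have := norm_setIntegral_le_of_norm_le_const (f := fun x => (u x)^2) (C := M^2) (vol_lt_top hbd)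
      (fun x hx => by
        simp only [norm_pow, Real.norm_eq_abs]
        exact pow_le_pow_left₀ (abs_nonneg _) (hM x hx.1) 2)
    exact (le_abs_self _).trans this
  have b3 : 0 ≤ ∫ x in Ω \ Ω', ‖fderiv ℝ u x‖^2 := integral_nonneg fun _ => sq_nonneg _
  set I := ∫ x in Ω', u x with hI
  have hI2 : |I| ≤ M * η := by
    have : I = - ∫ x in Ω \ Ω', u x := by linarith
    rw [this, abs_neg]; exact b1
  set c := I / V' with hc
  have hmean : ∫ x in Ω', (u x - c) = 0 := by
    rw [int_sub_const hb' hu.continuous, hc]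
    field_simp
    ring
  have key := nEig1_mul_le (Ω := Ω') (u := fun x => u x - c) (hu.sub contDiff_const) hmean
  rw [int_sub_sq hb' hu.continuous] at key
  simp only [fderiv_sub_const] at key
  have hI3 : I^2 / V' ≤ M^2 * η := by
    rw [div_le_iff₀ hV'0]
    have : I^2 ≤ (M * η)^2 := by rw [← sq_abs]; exact pow_le_pow_left₀ (abs_nonneg _) hI2 2
    refine this.trans ?_
    have : η ≤ V' := by rw [hVs]; linarith
    nlinarith [mul_nonneg (mul_nonneg (sq_nonneg M) hη0) (sub_nonneg.2 this)]
  have hW' : W - 2 * M^2 * η ≤ (∫ x in Ω', (u x)^2) - 2 * c * I + c^2 * V' := by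
    have : - 2 * c * I + c^2 * V' = - (I^2 / V') := by rw [hc]; field_simp; ring
    linarith
  have hn := nEig1_nonneg Ω'
  have h7 : nEig1 Ω' * (W - 2 * M^2 * η) ≤ E := by
    calc _ ≤ _ := mul_le_mul_of_nonneg_left hW' hn
      _ ≤ _ := key
      _ ≤ E := by linarith
  have h8 : 2 * M^2 * η * Q ≤ δ * W / 2 := by
    have h81 : η * (4 * (M^2 + 1) * Q) ≤ δ * W := by
      rwa [le_div_iff₀ (by positivity)] at hη2
    nlinarith [mul_nonneg hη0 hQ0.le]
  have hEW : E = (Q - δ / 2) * W := by rw [hQ]; field_simp; ring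
  have hqQ : Q ≤ nEig1 Ω + δ := by rw [hQ]; linarith
  refine le_trans ?_ hqQ
  by_contra hcon
  push Not at hcon
  have hpos : 0 < W - 2 * M^2 * η := by
    rw [le_div_iff₀ (by positivity)] at hη3
    have : 0 ≤ M^2 * η := by positivity
    linarith
  have h10 := mul_lt_mul_of_pos_right hcon hpos
  have h11 : Q * (W - 2 * M^2 * η) < (Q - δ / 2) * W := by
    rw [← hEW]; exact h10.trans_le h7
  linarith [h8, h11]


/-! ## Cutoff functions -/

def bump0 : ContDiffBump (0 : E2) := ⟨1, 2, one_pos, one_lt_two⟩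

def bmp (p : E2) (a : ℝ) (x : E2) : ℝ := bump0 (a⁻¹ • (x - p))

lemma bmp_smooth (p : E2) (a : ℝ) : ContDiff ℝ (⊤ : ℕ∞) (bmp p a) := by
  unfold bmp
  exact bump0.contDiff.comp (by fun_prop)

lemma bmp_nonneg (p : E2) (a : ℝ) (x : E2) : 0 ≤ bmp p a x := bump0.nonneg
lemma bmp_le_one (p : E2) (a : ℝ) (x : E2) : bmp p a x ≤ 1 := bump0.le_one

lemma bmp_one {p : E2} {a : ℝ} (ha : 0 < a) {x : E2} (hx : dist x p ≤ a) : bmp p a x = 1 := by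
  apply bump0.one_of_mem_closedBall
  rw [Metric.mem_closedBall, dist_zero_right, norm_smul, norm_inv, Real.norm_eq_abs, abs_of_pos ha,
    ← dist_eq_norm, inv_mul_le_iff₀ ha]
  simpa [bump0] using hx

lemma bmp_zero {p : E2} {a : ℝ} (ha : 0 < a) {x : E2} (hx : 2 * a ≤ dist x p) : bmp p a x = 0 := by
  apply bump0.zero_of_le_dist
  rw [dist_zero_right, norm_smul, norm_inv, Real.norm_eq_abs, abs_of_pos ha,
    ← dist_eq_norm, le_inv_mul_iff₀ ha]
  simpa [bump0, mul_comm] using hx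

lemma bmp_fderiv_zero_in {p : E2} {a : ℝ} (ha : 0 < a) {x : E2} (hx : dist x p < a) :
    fderiv ℝ (bmp p a) x = 0 := by
  have : bmp p a =ᶠ[nhds x] fun _ => 1 := by
    filter_upwards [Metric.isOpen_ball.mem_nhds (show x ∈ Metric.ball p a from hx)] with y hy
    exact bmp_one ha (le_of_lt hy)
  rw [this.fderiv_eq]; simp

lemma bmp_fderiv_zero_out {p : E2} {a : ℝ} (ha : 0 < a) {x : E2} (hx : 2 * a < dist x p) :
    fderiv ℝ (bmp p a) x = 0 := by
  have : bmp p a =ᶠ[nhds x] fun _ => 0 := by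
    have ho : IsOpen {y : E2 | 2 * a < dist y p} := isOpen_lt continuous_const (by fun_prop)
    filter_upwards [ho.mem_nhds hx] with y hy
    exact bmp_zero ha (le_of_lt hy)
  rw [this.fderiv_eq]; simp

lemma bmp_grad : ∃ L : ℝ, 0 < L ∧ ∀ (p : E2) (a : ℝ), 0 < a → ∀ x,
    ‖fderiv ℝ (bmp p a) x‖ ≤ L / a := by
  have hcs : ContDiff ℝ (⊤ : ℕ∞) (bump0 : E2 → ℝ) := bump0.contDiff
  obtain ⟨L, hL⟩ := (cd_grad hcs).bounded_above_of_compact_support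
    (bump0.hasCompactSupport.fderiv ℝ)
  refine ⟨max L 1, by positivity, fun p a ha x => ?_⟩
  have hd : DifferentiableAt ℝ (bump0 : E2 → ℝ) (a⁻¹ • (x - p)) := hcs.differentiable (by simp) _
  have h1 : HasFDerivAt (bmp p a)
      ((fderiv ℝ bump0 (a⁻¹ • (x - p))).comp (a⁻¹ • ContinuousLinearMap.id ℝ E2)) x :=
    hd.hasFDerivAt.comp x (((hasFDerivAt_id x).sub_const p).const_smul a⁻¹)
  rw [h1.fderiv]
  simp only [ContinuousLinearMap.comp_smul, ContinuousLinearMap.comp_id, norm_smul, norm_inv,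
    Real.norm_eq_abs, abs_of_pos ha]
  rw [inv_mul_eq_div]
  gcongr
  exact (hL _).trans (le_max_left _ _)

lemma vol_cb (p : E2) {r : ℝ} (hr : 0 ≤ r) :
    volume.real (Metric.closedBall p r) = r^2 * volume.real (Metric.closedBall (0:E2) 1) := by
  simp only [Measure.real]
  rw [vol_ball_ratio (q := 0) hr one_pos, ENNReal.toReal_mul, ENNReal.toReal_ofReal (by positivity)]
  simp

lemma exists_cutoff (p : E2) {ρ ε : ℝ} (hρ : 0 < ρ) (hε : 0 < ε) :
    ∃ χ : E2 → ℝ, ContDiff ℝ (⊤ : ℕ∞) χ ∧ (∀ x, 0 ≤ χ x) ∧ (∀ x, χ x ≤ 1) ∧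
      (∃ s > 0, ∀ x, dist x p ≤ s → χ x = 0) ∧ (∀ x, ρ ≤ dist x p → χ x = 1) ∧
      ∫ x, ‖fderiv ℝ χ x‖^2 ≤ ε := by
  obtain ⟨L, hL, hgrad⟩ := bmp_grad
  set v1 := volume.real (Metric.closedBall (0:E2) 1) with hv1
  have hv10 : 0 ≤ v1 := measureReal_nonneg
  obtain ⟨N, hN⟩ := exists_nat_gt (4 * L^2 * v1 / ε)
  have hN0 : (0:ℝ) < N := lt_of_le_of_lt (by positivity) hN
  set a : ℕ → ℝ := fun j => ρ / 2 / 4^j with ha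
  have ha0 : ∀ j, 0 < a j := fun j => by positivity
  have hamono : ∀ i j, i < j → 4 * a j ≤ a i := by
    intro i j hij
    simp only [ha]
    rw [← mul_div_assoc, div_le_div_iff₀ (by positivity) (by positivity)]
    have : (4:ℝ)^(i+1) ≤ 4^j := pow_le_pow_right₀ (by norm_num) hij
    rw [pow_succ] at this
    nlinarith
  set χ : E2 → ℝ := fun x => 1 - (N:ℝ)⁻¹ * ∑ j ∈ Finset.range N, bmp p (a j) x with hχ
  have hcd : ContDiff ℝ (⊤ : ℕ∞) χ :=
    contDiff_const.sub (contDiff_const.mul (ContDiff.sum fun j _ => bmp_smooth p (a j)))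
  have hder : ∀ x, fderiv ℝ χ x = -((N:ℝ)⁻¹ • ∑ j ∈ Finset.range N, fderiv ℝ (bmp p (a j)) x) := by
    intro x
    have h1 : HasFDerivAt (fun x => ∑ j ∈ Finset.range N, bmp p (a j) x)
        (∑ j ∈ Finset.range N, fderiv ℝ (bmp p (a j)) x) x :=
      HasFDerivAt.fun_sum fun j _ => ((bmp_smooth p (a j)).differentiable (by simp) x).hasFDerivAt
    exact ((h1.const_mul (N:ℝ)⁻¹).const_sub 1).fderiv
  have hmem : ∀ j x, fderiv ℝ (bmp p (a j)) x ≠ 0 → a j ≤ dist x p ∧ dist x p ≤ 2 * a j := by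
    intro j x h
    constructor
    · by_contra h2; push Not at h2; exact h (bmp_fderiv_zero_in (ha0 j) h2)
    · by_contra h2; push Not at h2; exact h (bmp_fderiv_zero_out (ha0 j) h2)
  have hpt : ∀ x, ‖fderiv ℝ χ x‖^2 ≤ ∑ j ∈ Finset.range N,
      (Metric.closedBall p (2 * a j)).indicator (fun _ => (N:ℝ)⁻¹^2 * (L / a j)^2) x := by
    intro x
    have hnn : ∀ j, 0 ≤ (Metric.closedBall p (2 * a j)).indicator
        (fun _ => (N:ℝ)⁻¹^2 * (L / a j)^2) x := fun j =>
      Set.indicator_nonneg (fun _ _ => by positivity) _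
    by_cases hex : ∃ j ∈ Finset.range N, fderiv ℝ (bmp p (a j)) x ≠ 0
    · obtain ⟨j, hj, hjx⟩ := hex
      have hs : ∑ i ∈ Finset.range N, fderiv ℝ (bmp p (a i)) x = fderiv ℝ (bmp p (a j)) x := by
        apply Finset.sum_eq_single_of_mem j hj
        intro i hi hij
        by_contra hne
        obtain ⟨h1, h2⟩ := hmem j x hjx
        obtain ⟨h3, h4⟩ := hmem i x hne
        rcases lt_or_gt_of_ne hij with h | h
        · have := hamono _ _ h
          linarith [ha0 i, ha0 j]
        · have := hamono _ _ h
          linarith [ha0 i, ha0 j]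
      rw [hder, hs, norm_neg, norm_smul, mul_pow]
      refine le_trans ?_ (Finset.single_le_sum (fun i _ => hnn i) hj)
      rw [Set.indicator_of_mem (by exact (hmem j x hjx).2)]
      rw [Real.norm_eq_abs, sq_abs]
      gcongr
      exact hgrad p (a j) (ha0 j) x
    · push Not at hex
      rw [hder, Finset.sum_eq_zero hex]
      simp only [smul_zero, neg_zero, norm_zero]
      rw [zero_pow two_ne_zero]
      exact Finset.sum_nonneg fun j _ => hnn j
  refine ⟨χ, hcd, ?_, ?_, ⟨a N, ha0 N, ?_⟩, ?_, ?_⟩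
  · intro x
    have : ∑ j ∈ Finset.range N, bmp p (a j) x ≤ N := by
      calc _ ≤ ∑ j ∈ Finset.range N, (1:ℝ) := Finset.sum_le_sum fun j _ => bmp_le_one _ _ _
        _ = N := by simp
    have h2 : (N:ℝ)⁻¹ * ∑ j ∈ Finset.range N, bmp p (a j) x ≤ 1 := by
      rw [inv_mul_le_iff₀ hN0]; linarith
    simp only [hχ]; linarith
  · intro x
    have : 0 ≤ (N:ℝ)⁻¹ * ∑ j ∈ Finset.range N, bmp p (a j) x :=
      mul_nonneg (by positivity) (Finset.sum_nonneg fun j _ => bmp_nonneg _ _ _)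
    simp only [hχ]; linarith
  · intro x hx
    have : ∑ j ∈ Finset.range N, bmp p (a j) x = N := by
      rw [Finset.sum_congr rfl (g := fun _ => (1:ℝ))]
      · simp
      · intro j hj
        apply bmp_one (ha0 j)
        have := hamono _ _ (Finset.mem_range.1 hj)
        linarith [ha0 N]
    simp only [hχ, this]
    rw [inv_mul_cancel₀ hN0.ne', sub_self]
  · intro x hx
    have : ∑ j ∈ Finset.range N, bmp p (a j) x = 0 := by
      apply Finset.sum_eq_zero
      intro j _
      apply bmp_zero (ha0 j)
      have : a j ≤ ρ / 2 := by
        simp only [ha]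
        exact div_le_self (by positivity) (one_le_pow₀ (by norm_num))
      linarith
    simp only [hχ, this]; simp
  · have hinteg : ∀ j, Integrable ((Metric.closedBall p (2 * a j)).indicator
        (fun _ => (N:ℝ)⁻¹^2 * (L / a j)^2)) := fun j =>
      (integrable_indicator_iff measurableSet_closedBall).2
        (integrableOn_const (measure_closedBall_lt_top.ne))
    calc ∫ x, ‖fderiv ℝ χ x‖^2 ≤ ∫ x, ∑ j ∈ Finset.range N,
          (Metric.closedBall p (2 * a j)).indicator (fun _ => (N:ℝ)⁻¹^2 * (L / a j)^2) x := by
          apply integral_mono_of_nonneg (Eventually.of_forall fun x => sq_nonneg _)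
            (integrable_finsetSum _ fun j _ => hinteg j) (Eventually.of_forall hpt)
      _ = ∑ j ∈ Finset.range N, (2 * a j)^2 * v1 * ((N:ℝ)⁻¹^2 * (L / a j)^2) := by
          rw [integral_finsetSum _ fun j _ => hinteg j]
          apply Finset.sum_congr rfl
          intro j _
          rw [integral_indicator measurableSet_closedBall, setIntegral_const,
            vol_cb _ (by linarith [ha0 j]), smul_eq_mul]
      _ = ∑ j ∈ Finset.range N, 4 * L^2 * v1 * (N:ℝ)⁻¹^2 := by
          apply Finset.sum_congr rfl
          intro j _
          have := (ha0 j).ne'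
          field_simp; ring
      _ = 4 * L^2 * v1 / N := by
          rw [Finset.sum_const, Finset.card_range, nsmul_eq_mul]; field_simp
      _ ≤ ε := by
          rw [div_le_iff₀ hN0]
          rw [div_lt_iff₀ hε] at hN
          linarith


/-! ## Points have zero capacity -/

lemma int_normsq_cs {F : Type*} [NormedAddCommGroup F] {u : E2 → F} (hu : Continuous u)
    (hc : HasCompactSupport u) : Integrable (fun x => ‖u x‖^2) := by
  have hc2 : HasCompactSupport (fun x => ‖u x‖^2) := by
    apply hc.mono
    intro x hx h0
    rw [Function.mem_support] at hx
    exact hx (by simp [h0])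
  have hcont : Continuous (fun x => ‖u x‖^2) := hu.norm.pow 2
  exact hcont.integrable_of_hasCompactSupport hc2

lemma int_sq_cs {u : E2 → ℝ} (hu : Continuous u)
    (hc : HasCompactSupport u) : Integrable (fun x => (u x)^2) := by
  have := int_normsq_cs hu hc
  simpa only [Real.norm_eq_abs, sq_abs] using this

lemma point_remove {u : E2 → ℝ} (hu : ContDiff ℝ (⊤ : ℕ∞) u) (hc : HasCompactSupport u)
    (h0 : ∫ x, (u x)^2 ≠ 0) (p : E2) {δ : ℝ} (hδ : 0 < δ) :
    ∃ v : E2 → ℝ, ContDiff ℝ (⊤ : ℕ∞) v ∧ Function.support v ⊆ Function.support u ∧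
      (∃ s > 0, ∀ x, dist x p ≤ s → v x = 0) ∧ ∫ x, (v x)^2 ≠ 0 ∧
      (∫ x, ‖fderiv ℝ v x‖^2) / (∫ x, (v x)^2) ≤
        (∫ x, ‖fderiv ℝ u x‖^2) / (∫ x, (u x)^2) + δ := by
  have hW : 0 < ∫ x, (u x)^2 := lt_of_le_of_ne (int_sq_nonneg u _) (Ne.symm h0)
  have hE : 0 ≤ ∫ x, ‖fderiv ℝ u x‖^2 := integral_nonneg fun _ => sq_nonneg _
  set W := ∫ x, (u x)^2 with hWd
  set E := ∫ x, ‖fderiv ℝ u x‖^2 with hEd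
  obtain ⟨M, hM⟩ := hu.continuous.bounded_above_of_compact_support hc
  have hM0 : 0 ≤ M := (norm_nonneg _).trans (hM 0)
  set v1 := volume.real (Metric.closedBall (0:E2) 1) with hv1
  have hv10 : 0 ≤ v1 := measureReal_nonneg
  set q := E / W with hq
  have hqW : q * W = E := by rw [hq]; field_simp
  obtain ⟨s, hs, hs1, hs2⟩ : ∃ s : ℝ, 0 < s ∧ 0 < W - M^2 * v1 * s^2 ∧
      0 < (q + δ) * (W - M^2 * v1 * s^2) - (1 + s) * E - M^2 * (s^2 + s) := by
    have c1 : Continuous (fun s : ℝ => W - M^2 * v1 * s^2) := by fun_prop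
    have c2 : Continuous (fun s : ℝ => (q + δ) * (W - M^2 * v1 * s^2) - (1 + s) * E
      - M^2 * (s^2 + s)) := by fun_prop
    have e1 : ∀ᶠ s in nhds (0:ℝ), 0 < W - M^2 * v1 * s^2 :=
      c1.continuousAt.eventually (lt_mem_nhds (by simpa using hW))
    have e2 : ∀ᶠ s in nhds (0:ℝ), 0 < (q + δ) * (W - M^2 * v1 * s^2) - (1 + s) * E
        - M^2 * (s^2 + s) :=
      c2.continuousAt.eventually (lt_mem_nhds (by
        have : (q + δ) * W - E = δ * W := by linarith
        simp only [ne_eq, OfNat.ofNat_ne_zero, not_false_eq_true, zero_pow, mul_zero, sub_zero,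
          add_zero, one_mul, this]
        positivity))
    obtain ⟨r, hr, h⟩ := Metric.eventually_nhds_iff.1 (e1.and e2)
    have := h (y := r / 2) (by simp [abs_of_pos hr]; linarith)
    exact ⟨r / 2, by positivity, this.1, this.2⟩
  obtain ⟨χ, hχ, hχ0, hχ1, ⟨σ, hσ, hχσ⟩, hχo, hχE⟩ := exists_cutoff p hs (show 0 < s^2 by positivity)
  have hsupp : Function.support (fun x => χ x * u x) ⊆ Function.support u := by
    intro x hx h; exact hx (by simp [h])
  have hvc : HasCompactSupport (fun x => χ x * u x) := hc.mono hsupp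
  have hvcd : ContDiff ℝ (⊤ : ℕ∞) (fun x => χ x * u x) := hχ.mul hu
  have hχc : HasCompactSupport (fderiv ℝ χ) := by
    have h1 : HasCompactSupport (fun x => χ x - 1) := by
      apply HasCompactSupport.intro (isCompact_closedBall p s)
      intro x hx
      rw [Metric.mem_closedBall, not_le] at hx
      rw [hχo x hx.le, sub_self]
    have h2 : fderiv ℝ (fun x => χ x - 1) = fderiv ℝ χ := by
      funext x; rw [fderiv_sub_const]
    rw [← h2]
    exact h1.fderiv ℝ
  have i1 : Integrable (fun x => ‖fderiv ℝ u x‖^2) := int_normsq_cs (cd_grad hu) (hc.fderiv ℝ)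
  have i2 : Integrable (fun x => ‖fderiv ℝ χ x‖^2) := int_normsq_cs (cd_grad hχ) hχc
  have i3 : Integrable (fun x => (u x)^2) := int_sq_cs hu.continuous hc
  have i4 : Integrable (fun x => (χ x * u x)^2) := int_sq_cs hvcd.continuous hvc
  have hgrad : ∀ x, ‖fderiv ℝ (fun x => χ x * u x) x‖^2 ≤
      (1 + s) * ‖fderiv ℝ u x‖^2 + (1 + 1 / s) * M^2 * ‖fderiv ℝ χ x‖^2 := by
    intro x
    have hd := ((hχ.differentiable (by simp) x).hasFDerivAt.mul
      (hu.differentiable (by simp) x).hasFDerivAt).fderiv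
    have hn : ‖fderiv ℝ (fun x => χ x * u x) x‖ ≤ ‖fderiv ℝ u x‖ + M * ‖fderiv ℝ χ x‖ := by
      have hd' : fderiv ℝ (fun x => χ x * u x) x = χ x • fderiv ℝ u x + u x • fderiv ℝ χ x := hd
      rw [hd']
      refine (norm_add_le _ _).trans ?_
      rw [norm_smul, norm_smul]
      gcongr
      · rw [Real.norm_eq_abs, abs_of_nonneg (hχ0 x)]
        exact mul_le_of_le_one_left (norm_nonneg _) (hχ1 x)
      · exact hM x
    set A := ‖fderiv ℝ u x‖
    set B := M * ‖fderiv ℝ χ x‖ with hB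
    have h1 : ‖fderiv ℝ (fun x => χ x * u x) x‖^2 ≤ (A + B)^2 :=
      pow_le_pow_left₀ (norm_nonneg _) hn 2
    have h2 : (A + B)^2 ≤ (1 + s) * A^2 + (1 + 1 / s) * B^2 := by
      have : (1 + s) * A^2 + (1 + 1 / s) * B^2 - (A + B)^2 = (s * A - B)^2 / s := by
        field_simp; ring
      have h3 : 0 ≤ (s * A - B)^2 / s := by positivity
      linarith
    refine (h1.trans h2).trans (le_of_eq ?_)
    rw [hB]; ring
  have hEv : ∫ x, ‖fderiv ℝ (fun x => χ x * u x) x‖^2 ≤ (1 + s) * E + M^2 * (s^2 + s) := by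
    calc _ ≤ ∫ x, ((1 + s) * ‖fderiv ℝ u x‖^2 + (1 + 1 / s) * M^2 * ‖fderiv ℝ χ x‖^2) :=
          integral_mono_of_nonneg (Eventually.of_forall fun x => sq_nonneg _)
            ((i1.const_mul _).add (i2.const_mul _)) (Eventually.of_forall hgrad)
      _ = (1 + s) * E + (1 + 1 / s) * M^2 * ∫ x, ‖fderiv ℝ χ x‖^2 := by
          rw [integral_add (i1.const_mul _) (i2.const_mul _), integral_const_mul,
            integral_const_mul]
      _ ≤ (1 + s) * E + (1 + 1 / s) * M^2 * s^2 := by gcongr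
      _ = _ := by field_simp
  have hWv : W - M^2 * v1 * s^2 ≤ ∫ x, (χ x * u x)^2 := by
    have hi : Integrable ((Metric.closedBall p s).indicator (fun _ => M^2)) :=
      (integrable_indicator_iff measurableSet_closedBall).2
        (integrableOn_const (measure_closedBall_lt_top.ne))
    have : W - M^2 * v1 * s^2 = ∫ x, ((u x)^2 - (Metric.closedBall p s).indicator (fun _ => M^2) x) := by
      rw [integral_sub i3 hi, integral_indicator measurableSet_closedBall, setIntegral_const,
            vol_cb _ hs.le, smul_eq_mul]
      ring
    rw [this]
    apply integral_mono (i3.sub hi) i4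
    intro x
    simp only [Pi.sub_apply]
    by_cases hx : x ∈ Metric.closedBall p s
    · rw [Set.indicator_of_mem hx]
      have h5 : (u x)^2 ≤ M^2 := by
        rw [← sq_abs]; exact pow_le_pow_left₀ (abs_nonneg _) (hM x) 2
      nlinarith [sq_nonneg (χ x * u x)]
    · rw [Set.indicator_of_notMem hx]
      rw [Metric.mem_closedBall, not_le] at hx
      rw [hχo x hx.le]; simp
  have hWv0 : 0 < ∫ x, (χ x * u x)^2 := hs1.trans_le hWv
  refine ⟨fun x => χ x * u x, hvcd, hsupp, ⟨σ, hσ, fun x hx => by simp [hχσ x hx]⟩, hWv0.ne', ?_⟩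
  rw [div_le_iff₀ hWv0]
  have hq0 : 0 ≤ q + δ := by positivity
  have := mul_le_mul_of_nonneg_left hWv hq0
  linarith

lemma points_remove {u : E2 → ℝ} (hu : ContDiff ℝ (⊤ : ℕ∞) u) (hc : HasCompactSupport u)
    (h0 : ∫ x, (u x)^2 ≠ 0) (P : Finset E2) : ∀ {δ : ℝ}, 0 < δ →
    ∃ v : E2 → ℝ, ContDiff ℝ (⊤ : ℕ∞) v ∧ Function.support v ⊆ Function.support u ∧
      (∃ s > 0, ∀ p ∈ P, ∀ x, dist x p ≤ s → v x = 0) ∧ ∫ x, (v x)^2 ≠ 0 ∧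
      (∫ x, ‖fderiv ℝ v x‖^2) / (∫ x, (v x)^2) ≤
        (∫ x, ‖fderiv ℝ u x‖^2) / (∫ x, (u x)^2) + δ := by
  classical
  induction P using Finset.induction_on with
  | empty =>
    intro δ hδ
    exact ⟨u, hu, subset_rfl, ⟨1, one_pos, by simp⟩, h0, by linarith⟩
  | insert p P hp ih =>
    intro δ hδ
    obtain ⟨v, hv1, hv2, ⟨s, hs, hv3⟩, hv4, hv5⟩ := ih (half_pos hδ)
    obtain ⟨w, hw1, hw2, ⟨s', hs', hw3⟩, hw4, hw5⟩ :=
      point_remove hv1 (hc.mono hv2) hv4 p (half_pos hδ)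
    refine ⟨w, hw1, hw2.trans hv2, ⟨min s s', by positivity, ?_⟩, hw4, by linarith⟩
    intro q hq x hx
    rcases Finset.mem_insert.1 hq with rfl | hq
    · exact hw3 x (hx.trans (min_le_right _ _))
    · have := hv3 q hq x (hx.trans (min_le_left _ _))
      by_contra h
      exact hw2 h this

lemma dEig1_anti {Ω Ω' : Set E2} (ho : IsOpen Ω') (hne : Ω'.Nonempty) (h : Ω' ⊆ Ω) :
    dEig1 Ω ≤ dEig1 Ω' := by
  rw [dEig1_eq, dEig1_eq]
  apply csInf_le_csInf (dSet_bdd _) (dSet_nonempty ho hne)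
  rintro q ⟨u, hu, hc, hs, h⟩
  exact ⟨u, hu, hc, hs.trans ‹_›, h⟩

lemma lam_near {Ω : Set E2} (ho : IsOpen Ω) (hne : Ω.Nonempty) (P : Finset E2) {δ : ℝ}
    (hδ : 0 < δ) : ∃ r₀ > 0, ∀ r, r < r₀ → dEig1 (perf Ω P r) ≤ dEig1 Ω + δ := by
  obtain ⟨q, ⟨u, hu, hc, hs, h0, rfl⟩, hq⟩ := exists_lt_of_csInf_lt (dSet_nonempty ho hne)
    (show sInf (dSet Ω) < dEig1 Ω + δ / 2 by rw [← dEig1_eq]; linarith)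
  obtain ⟨v, hv1, hv2, ⟨s, hs', hv3⟩, hv4, hv5⟩ := points_remove hu hc h0 P (half_pos hδ)
  refine ⟨s, hs', fun r hr => ?_⟩
  have : dEig1 (perf Ω P r) ≤ _ := csInf_le (dSet_bdd _) ⟨v, hv1, hc.mono hv2, ?_, hv4, rfl⟩
  · linarith
  · intro x hx
    refine mem_perf.2 ⟨hs (closure_mono hv2 hx), fun p hp => ?_⟩
    by_contra hcon
    push Not at hcon
    apply (notMem_tsupport_iff_eventuallyEq.2 _) hx
    filter_upwards [Metric.isOpen_ball.mem_nhds (show x ∈ Metric.ball p s from hcon.trans_lt hr)]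
      with y hy
    exact hv3 p hp y (le_of_lt hy)

lemma hole_area {Ω : Set E2} (hb : Bornology.IsBounded Ω) {P : Finset E2} {r R : ℝ} (hr : 0 ≤ r)
    (hR : 0 < R) (hP : GoodPack Ω P R) :
    (volume (Ω \ perf Ω P r)).toReal ≤ (r / R)^2 * (volume Ω).toReal := by
  have h1 : volume (Ω \ perf Ω P r) ≤ ENNReal.ofReal ((r / R)^2) * volume Ω := by
    calc volume (Ω \ perf Ω P r) ≤ volume (⋃ p ∈ P, Metric.closedBall p r) := by
          apply measure_mono
          rintro x ⟨hx1, hx2⟩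
          by_contra h
          exact hx2 ⟨hx1, h⟩
      _ ≤ ∑ p ∈ P, volume (Metric.closedBall p r) := measure_biUnion_finset_le _ _
      _ = ∑ p ∈ P, ENNReal.ofReal ((r / R)^2) * volume (Metric.closedBall p R) :=
          Finset.sum_congr rfl fun p _ => vol_ball_ratio hr hR
      _ = ENNReal.ofReal ((r / R)^2) * volume (⋃ p ∈ P, Metric.closedBall p R) := by
          rw [← Finset.mul_sum, measure_biUnion_finset]
          · intro p hp q hq hpq
            apply Metric.closedBall_disjoint_closedBall
            have := hP.2.1 p hp q hq hpq
            linarith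
          · exact fun p _ => measurableSet_closedBall
      _ ≤ _ := by
          gcongr
          exact Set.iUnion₂_subset hP.1
  have h2 := ENNReal.toReal_mono (ENNReal.mul_ne_top (by simp) (vol_lt_top hb).ne) h1
  rwa [ENNReal.toReal_mul, ENNReal.toReal_ofReal (by positivity)] at h2


/-! ## Shrinking holes by a diffeomorphism -/

lemma change_var {Φ : E2 → E2} (hΦ : ContDiff ℝ (⊤ : ℕ∞) Φ) (hbij : Function.Bijective Φ)
    (F : E2 → ℝ) : ∫ x, F x = ∫ x, |(fderiv ℝ Φ x).det| * F (Φ x) := by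
  have h := integral_image_eq_integral_abs_det_fderiv_smul volume (s := univ) (f := Φ)
    (f' := fun x => fderiv ℝ Φ x) MeasurableSet.univ
    (fun x _ => ((hΦ.differentiable (by simp) x).hasFDerivAt).hasFDerivWithinAt)
    hbij.injective.injOn F
  rw [Set.image_univ, hbij.surjective.range_eq] at h
  simpa using h

lemma change_W {Φ : E2 → E2} (hΦ : ContDiff ℝ (⊤ : ℕ∞) Φ) (hbij : Function.Bijective Φ) {ε : ℝ}
    (hdet : ∀ x, |(fderiv ℝ Φ x).det| ≤ 1 + ε) {u : E2 → ℝ}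
    (hi : Integrable (fun x => (u (Φ x))^2)) :
    ∫ x, (u x)^2 ≤ (1 + ε) * ∫ x, (u (Φ x))^2 := by
  rw [change_var hΦ hbij (fun x => (u x)^2), ← integral_const_mul]
  apply integral_mono_of_nonneg (Eventually.of_forall fun x => by positivity) (hi.const_mul _)
  refine Eventually.of_forall fun x => ?_
  simp only
  gcongr
  exact hdet x

lemma change_E {Φ : E2 → E2} (hΦ : ContDiff ℝ (⊤ : ℕ∞) Φ) (hbij : Function.Bijective Φ) {ε : ℝ}
    (hε : 0 ≤ ε) (hdet : ∀ x, 1 - ε ≤ |(fderiv ℝ Φ x).det|) (hn : ∀ x, ‖fderiv ℝ Φ x‖ ≤ 1 + ε)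
    {u : E2 → ℝ}
    (hu : ContDiff ℝ (⊤ : ℕ∞) u) (hcu : HasCompactSupport u) (hε1 : ε < 1) :
    (1 - ε) * ∫ x, ‖fderiv ℝ (fun x => u (Φ x)) x‖^2 ≤ (1 + ε)^2 * ∫ x, ‖fderiv ℝ u x‖^2 := by
  have hI : Integrable (fun x => |(fderiv ℝ Φ x).det| * ‖fderiv ℝ u (Φ x)‖^2) := by
    have h := integrableOn_image_iff_integrableOn_abs_det_fderiv_smul volume (s := univ) (f := Φ)
      (f' := fun x => fderiv ℝ Φ x) MeasurableSet.univ
      (fun x _ => ((hΦ.differentiable (by simp) x).hasFDerivAt).hasFDerivWithinAt)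
      hbij.injective.injOn (fun x => ‖fderiv ℝ u x‖^2)
    rw [Set.image_univ, hbij.surjective.range_eq] at h
    simpa using h.1 (int_normsq_cs (cd_grad hu) (hcu.fderiv ℝ)).integrableOn
  rw [change_var hΦ hbij (fun x => ‖fderiv ℝ u x‖^2), ← integral_const_mul, ← integral_const_mul]
  apply integral_mono_of_nonneg
    (Eventually.of_forall fun x => mul_nonneg (by linarith) (sq_nonneg _)) (hI.const_mul _)
  refine Eventually.of_forall fun x => ?_
  simp only
  have hc : fderiv ℝ (fun x => u (Φ x)) x = (fderiv ℝ u (Φ x)).comp (fderiv ℝ Φ x) :=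
    ((hu.differentiable (by simp) (Φ x)).hasFDerivAt.comp x
      (hΦ.differentiable (by simp) x).hasFDerivAt).fderiv
  rw [hc]
  have h1 : ‖(fderiv ℝ u (Φ x)).comp (fderiv ℝ Φ x)‖ ≤ ‖fderiv ℝ u (Φ x)‖ * (1 + ε) :=
    (ContinuousLinearMap.opNorm_comp_le _ _).trans (by gcongr; exact hn x)
  calc (1 - ε) * ‖(fderiv ℝ u (Φ x)).comp (fderiv ℝ Φ x)‖^2
      ≤ |(fderiv ℝ Φ x).det| * (‖fderiv ℝ u (Φ x)‖ * (1 + ε))^2 := by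
        gcongr
        exact hdet x
    _ = _ := by ring

lemma near_id_bij {g : E2 → E2} {B t : ℝ} (hB : 0 ≤ B) (hg : ∀ x y, ‖g x - g y‖ ≤ B * ‖x - y‖)
    (ht : 0 ≤ t) (htB : t * B ≤ 1 / 2) : Function.Bijective (fun x => x - t • g x) := by
  have hA : ApproximatesLinearOn (fun x => x - t • g x)
      ((ContinuousLinearEquiv.refl ℝ E2 : E2 ≃L[ℝ] E2) : E2 →L[ℝ] E2) univ (1/2 : ℝ≥0) := by
    intro x _ y _
    have : x - t • g x - (y - t • g y) - (x - y) = -(t • (g x - g y)) := by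
      rw [smul_sub]; abel
    simp only [ContinuousLinearEquiv.coe_refl, ContinuousLinearMap.coe_id', id_eq]
    rw [this, norm_neg, norm_smul, Real.norm_eq_abs, abs_of_nonneg ht]
    calc t * ‖g x - g y‖ ≤ t * (B * ‖x - y‖) := by gcongr; exact hg x y
      _ = (t * B) * ‖x - y‖ := by ring
      _ ≤ (1/2) * ‖x - y‖ := by gcongr
      _ = _ := by simp
  have hN : (1/2 : ℝ≥0) < ‖((ContinuousLinearEquiv.refl ℝ E2).symm : E2 →L[ℝ] E2)‖₊⁻¹ := by
    have : ‖((ContinuousLinearEquiv.refl ℝ E2).symm : E2 →L[ℝ] E2)‖₊ = 1 := by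
      apply NNReal.eq
      simp
    rw [this, inv_one]
    exact NNReal.half_lt_self one_ne_zero
  exact ⟨by simpa [Set.injOn_univ] using hA.injOn (Or.inr hN), hA.surjective (Or.inr hN)⟩

lemma diffeo_step {Ω : Set E2} (ho : IsOpen Ω) (hb : Bornology.IsBounded Ω) {P : Finset E2} {R : ℝ}
    (hR : 0 < R) (hP : GoodPack Ω P R) {η : ℝ} (hη : 0 < η) :
    ∃ t, 0 < t ∧ t < 1 ∧ ∀ r, 0 < r → r ≤ R / 2 → (perf Ω P r).Nonempty →
      dEig1 (perf Ω P r) ≤ (1 + η) * dEig1 (perf Ω P ((1 - t) * r)) := by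
  obtain ⟨ε, hε, hε1, hεη⟩ : ∃ ε : ℝ, 0 < ε ∧ ε < 1 ∧ (1 + ε)^3 ≤ (1 + η) * (1 - ε) := by
    have c : Continuous (fun ε : ℝ => (1 + η) * (1 - ε) - (1 + ε)^3) := by fun_prop
    have e : ∀ᶠ ε in nhds (0:ℝ), 0 < (1 + η) * (1 - ε) - (1 + ε)^3 :=
      c.continuousAt.eventually (lt_mem_nhds (by simpa using hη))
    obtain ⟨r, hr, h⟩ := Metric.eventually_nhds_iff.1 e
    have hm : 0 < min (r / 2) (1 / 2) := by positivity
    have := h (y := min (r / 2) (1 / 2)) (by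
      rw [dist_zero_right, Real.norm_eq_abs, abs_of_pos hm]
      have := min_le_left (r / 2) (1 / 2)
      linarith)
    exact ⟨min (r / 2) (1 / 2), hm, (min_le_right _ _).trans_lt (by norm_num), by linarith⟩
  set g : E2 → E2 := fun x => ∑ p ∈ P, bmp p (R / 2) x • (x - p) with hg
  have hR2 : 0 < R / 2 := by positivity
  have hgcd : ContDiff ℝ (⊤ : ℕ∞) g :=
    ContDiff.sum fun p _ => (bmp_smooth p _).smul (contDiff_id.sub contDiff_const)
  have hg0 : ∀ x, x ∉ Ω → g x = 0 := by
    intro x hx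
    apply Finset.sum_eq_zero
    intro p hp
    rw [bmp_zero hR2, zero_smul]
    by_contra hcon
    push Not at hcon
    exact hx (hP.1 p hp (by rw [Metric.mem_closedBall]; linarith))
  have hgc : HasCompactSupport g := by
    apply HasCompactSupport.intro (Metric.isCompact_of_isClosed_isBounded isClosed_closure hb.closure)
    intro x hx
    exact hg0 x fun h => hx (subset_closure h)
  obtain ⟨B, hB⟩ := (hgcd.continuous_fderiv (by simp)).bounded_above_of_compact_support
    (hgc.fderiv ℝ)
  have hB0 : 0 ≤ B := (norm_nonneg _).trans (hB 0)
  have hlip : ∀ x y, ‖g x - g y‖ ≤ B * ‖x - y‖ := fun x y =>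
    Convex.norm_image_sub_le_of_norm_fderiv_le (𝕜 := ℝ) (s := univ)
      (fun x _ => hgcd.differentiable (by simp) x) (fun x _ => hB x) convex_univ trivial trivial
  obtain ⟨ς, hς, hdet⟩ : ∃ ς > 0, ∀ A : E2 →L[ℝ] E2, dist A (ContinuousLinearMap.id ℝ E2) < ς →
      dist A.det 1 < ε := by
    have := (Metric.continuous_iff.1 (ContinuousLinearMap.continuous_det (𝕜 := ℝ) (E := E2)))
      (ContinuousLinearMap.id ℝ E2) ε hε
    simpa [ContinuousLinearMap.det] using this
  set t := min (min (1 / 2) (ς / 2)) ε / (B + 1) with ht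
  have hm0 : 0 < min (min (1 / 2) (ς / 2)) ε := by positivity
  have ht0 : 0 < t := by positivity
  have htB1 : t * B ≤ min (min (1 / 2) (ς / 2)) ε := by
    rw [ht, div_mul_eq_mul_div, div_le_iff₀ (by positivity)]
    nlinarith
  have hl1 : min (min (1 / 2) (ς / 2)) ε ≤ 1 / 2 := (min_le_left _ _).trans (min_le_left _ _)
  have hl2 : min (min (1 / 2) (ς / 2)) ε ≤ ς / 2 := (min_le_left _ _).trans (min_le_right _ _)
  have hl3 : min (min (1 / 2) (ς / 2)) ε ≤ ε := min_le_right _ _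
  have ht1 : t < 1 := by
    rw [ht, div_lt_one (by positivity)]
    linarith
  set Φ : E2 → E2 := fun x => x - t • g x with hΦ
  have hΦcd : ContDiff ℝ (⊤ : ℕ∞) Φ := contDiff_id.sub (hgcd.const_smul t)
  have hbij : Function.Bijective Φ := near_id_bij hB0 hlip ht0.le (htB1.trans hl1)
  have hder : ∀ x, fderiv ℝ Φ x = ContinuousLinearMap.id ℝ E2 - t • fderiv ℝ g x := fun x =>
    ((hasFDerivAt_id x).sub ((hgcd.differentiable (by simp) x).hasFDerivAt.const_smul t)).fderiv
  have hnt : ∀ x, ‖t • fderiv ℝ g x‖ ≤ t * B := by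
    intro x
    rw [norm_smul, Real.norm_eq_abs, abs_of_pos ht0]
    gcongr
    exact hB x
  have hn : ∀ x, ‖fderiv ℝ Φ x‖ ≤ 1 + ε := by
    intro x
    rw [hder]
    refine (norm_sub_le _ _).trans ?_
    have : ‖ContinuousLinearMap.id ℝ E2‖ ≤ 1 := ContinuousLinearMap.norm_id_le
    linarith [hnt x]
  have hd : ∀ x, |(fderiv ℝ Φ x).det - 1| < ε := by
    intro x
    apply hdet
    rw [hder, dist_eq_norm]
    have : ContinuousLinearMap.id ℝ E2 - t • fderiv ℝ g x - ContinuousLinearMap.id ℝ E2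
      = -(t • fderiv ℝ g x) := by abel
    rw [this, norm_neg]
    linarith [hnt x]
  have hd1 : ∀ x, 1 - ε ≤ |(fderiv ℝ Φ x).det| := fun x => by
    have := abs_lt.1 (hd x)
    exact le_trans (by linarith) (le_abs_self _)
  have hd2 : ∀ x, |(fderiv ℝ Φ x).det| ≤ 1 + ε := fun x => by
    have := abs_lt.1 (hd x)
    rw [abs_le]; constructor <;> linarith
  refine ⟨t, ht0, ht1, fun r hr hrR hne => ?_⟩
  have hsubp : perf Ω P r ⊆ perf Ω P ((1 - t) * r) := by
    intro x hx
    rw [mem_perf] at hx ⊢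
    refine ⟨hx.1, fun p hp => lt_of_le_of_lt ?_ (hx.2 p hp)⟩
    nlinarith
  have hΦin : ∀ x, Φ x ∈ perf Ω P ((1 - t) * r) → x ∈ perf Ω P r := by
    intro x hx
    rw [mem_perf] at hx ⊢
    have hxΩ : x ∈ Ω := by
      by_contra h
      have : Φ x = x := by simp [hΦ, hg0 x h]
      rw [this] at hx
      exact h hx.1
    refine ⟨hxΩ, fun p hp => ?_⟩
    by_contra hcon
    push Not at hcon
    have hgx : g x = x - p := by
      rw [hg]
      simp only
      rw [Finset.sum_eq_single_of_mem p hp, bmp_one hR2 (by linarith), one_smul]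
      intro q hq hqp
      rw [bmp_zero hR2, zero_smul]
      have h1 := hP.2.1 p hp q hq (Ne.symm hqp)
      have h2 := dist_triangle p x q
      rw [dist_comm p x] at h2
      linarith
    have h3 := hx.2 p hp
    have h4 : Φ x - p = (1 - t) • (x - p) := by
      simp only [hΦ, hgx, sub_smul, one_smul]; abel
    rw [dist_eq_norm, h4, norm_smul, Real.norm_eq_abs, abs_of_pos (by linarith), ← dist_eq_norm] at h3
    have := mul_le_mul_of_nonneg_left hcon (show 0 ≤ 1 - t by linarith)
    linarith
  rw [← div_le_iff₀' (by positivity), dEig1_eq (perf Ω P ((1 - t) * r))]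
  refine le_csInf (dSet_nonempty (perf_open ho _ _) (hne.mono hsubp)) ?_
  rintro q ⟨u, hu, hc, hs, h0, rfl⟩
  have hvs : tsupport (fun x => u (Φ x)) ⊆ Φ ⁻¹' (tsupport u) := by
    apply closure_minimal _ ((isClosed_tsupport u).preimage hΦcd.continuous)
    intro x hx
    exact subset_tsupport u hx
  have hvs2 : tsupport (fun x => u (Φ x)) ⊆ perf Ω P r := fun x hx => hΦin x (hs (hvs hx))
  have hvc : HasCompactSupport (fun x => u (Φ x)) :=
    Metric.isCompact_of_isClosed_isBounded (isClosed_tsupport _)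
      (hb.subset (hvs2.trans (perf_subset _ _ _)))
  have hvcd : ContDiff ℝ (⊤ : ℕ∞) (fun x => u (Φ x)) := hu.comp hΦcd
  have k1 := dEig1_mul_le hvcd hvc hvs2
  have k2 := change_W hΦcd hbij hd2 (int_sq_cs hvcd.continuous hvc)
  have k3 := change_E hΦcd hbij hε.le hd1 hn hu hc hε1
  have hW : 0 < ∫ x, (u x)^2 := lt_of_le_of_ne (int_sq_nonneg u _) (Ne.symm h0)
  rw [div_le_div_iff₀ (by positivity) hW]
  have hl0 := dEig1_nonneg (perf Ω P r)
  set l := dEig1 (perf Ω P r)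
  have hE : 0 ≤ ∫ x, ‖fderiv ℝ u x‖^2 := integral_nonneg fun _ => sq_nonneg _
  set W := ∫ x, (u x)^2
  set E := ∫ x, ‖fderiv ℝ u x‖^2
  set W' := ∫ x, (u (Φ x))^2
  set E' := ∫ x, ‖fderiv ℝ (fun x => u (Φ x)) x‖^2
  have m1 : l * W * (1 - ε) ≤ (1 + ε)^3 * E := by
    calc l * W * (1 - ε) ≤ l * ((1 + ε) * W') * (1 - ε) := by
          gcongr
      _ = (1 + ε) * ((1 - ε) * (l * W')) := by ring
      _ ≤ (1 + ε) * ((1 - ε) * E') := by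
          gcongr
      _ ≤ (1 + ε) * ((1 + ε)^2 * E) := by gcongr
      _ = _ := by ring
  have m2 : (1 + ε)^3 * E ≤ (1 + η) * (1 - ε) * E := by gcongr
  have m3 : l * W * (1 - ε) ≤ E * (1 + η) * (1 - ε) := by linarith
  exact le_of_mul_le_mul_right m3 (by linarith)

/-- The unit vector with angle `θ`. -/
def eang (θ : ℝ) : E2 := !₂[Real.cos θ, Real.sin θ]

lemma eang_cont : Continuous eang := by
  unfold eang
  refine (PiLp.continuous_toLp 2 _).comp ?_
  refine continuous_pi fun i => ?_
  fin_cases i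
  · exact Real.continuous_cos
  · exact Real.continuous_sin

lemma eang_norm (θ : ℝ) : ‖eang θ‖ = 1 := by
  rw [EuclideanSpace.norm_eq]
  simp [eang, Fin.sum_univ_two]

lemma eang_deriv (θ : ℝ) : HasDerivAt eang (eang (θ + π / 2)) θ := by
  have h : HasDerivAt (fun θ : ℝ => (![Real.cos θ, Real.sin θ] : Fin 2 → ℝ))
      (![Real.cos (θ + π/2), Real.sin (θ + π/2)]) θ := by
    rw [hasDerivAt_pi]
    intro i
    fin_cases i
    · simpa [Real.cos_add_pi_div_two] using Real.hasDerivAt_cos θ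
    · simpa [Real.sin_add_pi_div_two] using Real.hasDerivAt_sin θ
  have h2 := (PiLp.continuousLinearEquiv 2 ℝ (fun _ : Fin 2 => ℝ)).symm.hasFDerivAt.comp_hasDerivAt θ h
  exact h2

lemma polar_lint (p : E2) {F : E2 → ℝ≥0∞} (hF : Measurable F) :
    ∫⁻ x, F x = ∫⁻ s in Ioi (0:ℝ), ∫⁻ θ in Ioo (-π) π,
      ENNReal.ofReal s * F (p + s • eang θ) := by
  have h1 : ∫⁻ x, F x = ∫⁻ x, F (p + x) := (lintegral_add_left_eq_self F p).symm
  have hG : Measurable fun x => F (p + x) := hF.comp (measurable_const_add p)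
  have h2 : ∫⁻ x, F (p + x) = ∫⁻ y : Fin 2 → ℝ, F (p + WithLp.toLp 2 y) :=
    ((PiLp.volume_preserving_toLp (Fin 2)).lintegral_comp hG).symm
  have hG2 : Measurable fun y : Fin 2 → ℝ => F (p + WithLp.toLp 2 y) :=
    hG.comp (PiLp.volume_preserving_toLp (Fin 2)).measurable
  have h3 : ∫⁻ y : Fin 2 → ℝ, F (p + WithLp.toLp 2 y)
      = ∫⁻ z : ℝ × ℝ, F (p + !₂[z.1, z.2]) := by
    have := ((volume_preserving_finTwoArrow ℝ).symm).lintegral_comp hG2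
    rw [← this]
    rfl
  rw [h1, h2, h3, ← lintegral_comp_polarCoord_symm]
  have h4 : polarCoord.target = Ioi (0:ℝ) ×ˢ Ioo (-π) π := rfl
  rw [h4, Measure.volume_eq_prod, ← Measure.prod_restrict, lintegral_prod]
  · refine lintegral_congr fun s => lintegral_congr fun θ => ?_
    have : (!₂[(polarCoord.symm (s, θ)).1, (polarCoord.symm (s, θ)).2] : E2) = s • eang θ := by
      ext i; fin_cases i <;> simp [eang, polarCoord_symm_apply]
    rw [this, smul_eq_mul]
  · have hm : Measurable fun z : ℝ × ℝ => F (p + z.1 • eang z.2) := by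
      apply hF.comp
      apply Continuous.measurable
      have := eang_cont
      fun_prop
    have : (fun z : ℝ × ℝ => ENNReal.ofReal z.1 • F (p + !₂[(polarCoord.symm z).1, (polarCoord.symm z).2]))
        = fun z => ENNReal.ofReal z.1 * F (p + z.1 • eang z.2) := by
      funext z
      have : (!₂[(polarCoord.symm z).1, (polarCoord.symm z).2] : E2) = z.1 • eang z.2 := by
        ext i; fin_cases i <;> simp [eang, polarCoord_symm_apply]
      rw [this, smul_eq_mul]
    refine Measurable.aemeasurable ?_
    show Measurable (fun z : ℝ × ℝ =>
      ENNReal.ofReal z.1 • F (p + !₂[(polarCoord.symm z).1, (polarCoord.symm z).2]))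
    rw [this]
    exact (measurable_fst.ennreal_ofReal).mul hm

/-- The open annulus. -/
def ann (p : E2) (a b : ℝ) : Set E2 := {x | a < dist x p ∧ dist x p < b}

lemma ann_meas (p : E2) (a b : ℝ) : MeasurableSet (ann p a b) := by
  apply IsOpen.measurableSet
  exact (isOpen_lt continuous_const (continuous_id.dist continuous_const)).inter
    (isOpen_lt (continuous_id.dist continuous_const) continuous_const)

lemma dist_polar (p : E2) {s : ℝ} (hs : 0 ≤ s) (θ : ℝ) : dist (p + s • eang θ) p = s := by
  rw [dist_eq_norm, add_sub_cancel_left, norm_smul, eang_norm, mul_one, Real.norm_of_nonneg hs]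

lemma polar_meas (p : E2) {F : E2 → ℝ≥0∞} (hF : Measurable F) :
    Measurable fun z : ℝ × ℝ => F (p + z.1 • eang z.2) := by
  apply hF.comp
  apply Continuous.measurable
  have := eang_cont
  fun_prop

lemma polar_ann (p : E2) {F : E2 → ℝ≥0∞} (hF : Measurable F) {a b : ℝ} (ha : 0 ≤ a) :
    ∫⁻ x in ann p a b, F x = ∫⁻ s in Ioo a b, ENNReal.ofReal s * ∫⁻ θ in Ioo (-π) π,
      F (p + s • eang θ) := by
  rw [← lintegral_indicator (ann_meas p a b), polar_lint p (hF.indicator (ann_meas p a b))]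
  have hsub : Ioo a b ⊆ Ioi 0 := fun s hs => lt_of_le_of_lt ha hs.1
  have h1 : ∀ s ∈ Ioi (0:ℝ), (∫⁻ θ in Ioo (-π) π,
      ENNReal.ofReal s * (ann p a b).indicator F (p + s • eang θ))
      = (Ioo a b).indicator (fun s => ENNReal.ofReal s * ∫⁻ θ in Ioo (-π) π,
        F (p + s • eang θ)) s := by
    intro s hs
    have hs0 : (0:ℝ) ≤ s := le_of_lt hs
    have hm : Measurable fun θ => F (p + s • eang θ) :=
      (polar_meas p hF).comp (measurable_prodMk_left (x := s))
    by_cases h : s ∈ Ioo a b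
    · rw [indicator_of_mem h, ← lintegral_const_mul _ hm]
      refine lintegral_congr fun θ => ?_
      rw [indicator_of_mem]
      show a < _ ∧ _ < b
      rw [dist_polar p hs0]; exact h
    · rw [indicator_of_notMem h]
      rw [lintegral_eq_zero_iff']
      · refine Eventually.of_forall fun θ => ?_
        show ENNReal.ofReal s * (ann p a b).indicator F (p + s • eang θ) = 0
        rw [indicator_of_notMem]
        · simp
        · intro h2
          apply h
          have h3 : a < dist (p + s • eang θ) p ∧ dist (p + s • eang θ) p < b := h2
          rwa [dist_polar p hs0] at h3
      · exact ((((polar_meas p (hF.indicator (ann_meas p a b))).comp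
          (measurable_prodMk_left (x := s)))).const_mul _).aemeasurable
  rw [setLIntegral_congr_fun measurableSet_Ioi h1, lintegral_indicator measurableSet_Ioo,
    Measure.restrict_restrict measurableSet_Ioo, inter_eq_left.mpr hsub]

lemma polar_ann_swap (p : E2) {F : E2 → ℝ≥0∞} (hF : Measurable F) {a b : ℝ} (ha : 0 ≤ a) :
    ∫⁻ x in ann p a b, F x = ∫⁻ θ in Ioo (-π) π, ∫⁻ s in Ioo a b, ENNReal.ofReal s *
      F (p + s • eang θ) := by
  rw [polar_ann p hF ha, lintegral_lintegral_swap]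
  · refine lintegral_congr fun s => ?_
    rw [lintegral_const_mul]
    exact (polar_meas p hF).comp (measurable_prodMk_left (x := s))
  · have : Measurable (fun z : ℝ × ℝ => ENNReal.ofReal z.2 * F (p + z.2 • eang z.1)) :=
      (measurable_snd.ennreal_ofReal).mul ((polar_meas p hF).comp measurable_swap)
    exact this.aemeasurable

lemma polar_meas_s (p : E2) {F : E2 → ℝ≥0∞} (hF : Measurable F) (θ : ℝ) :
    Measurable fun s : ℝ => F (p + s • eang θ) := by
  apply hF.comp
  apply Continuous.measurable
  fun_prop

lemma polar_meas_swap (p : E2) {F : E2 → ℝ≥0∞} (hF : Measurable F) :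
    Measurable fun z : ℝ × ℝ => F (p + z.2 • eang z.1) := by
  apply hF.comp
  apply Continuous.measurable
  have := eang_cont
  fun_prop

lemma arc_est0 {u : E2 → ℝ} (hu : ContDiff ℝ (⊤ : ℕ∞) u) (p : E2) {s : ℝ} (hs : 0 ≤ s)
    {θ θ' : ℝ} (h : θ' ∈ Ioo (-π) π) (h' : θ ∈ Ioo (-π) π) (hle : θ' ≤ θ) :
    ‖u (p + s • eang θ) - u (p + s • eang θ')‖ₑ^2 ≤
      7 * ENNReal.ofReal s^2 * ∫⁻ τ in Ioo (-π) π, ‖fderiv ℝ u (p + s • eang τ)‖ₑ^2 := by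
  have hd : ∀ t, HasDerivAt (fun t => u (p + s • eang t))
      (fderiv ℝ u (p + s • eang t) (s • eang (t + π/2))) t := fun t =>
    ((hu.differentiable (by simp) _).hasFDerivAt).comp_hasDerivAt t
      (((eang_deriv t).const_smul s).const_add p)
  have hcd : Continuous fun t => fderiv ℝ u (p + s • eang t) (s • eang (t + π/2)) := by
    have h1 := cd_grad hu
    have h2 := eang_cont
    have h3 : Continuous fun t => fderiv ℝ u (p + s • eang t) := h1.comp (by fun_prop)
    exact h3.clm_apply (by fun_prop)
  have hpi : θ - θ' ≤ 7 := by
    have := h.1; have := h'.2; have := Real.pi_lt_d2; linarith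
  have hm : Measurable fun τ => ‖fderiv ℝ u (p + s • eang τ)‖ₑ^2 :=
    ((polar_meas p (meas_enorm_grad hu)).comp (measurable_prodMk_left (x := s))).pow_const 2
  calc _ ≤ ENNReal.ofReal (θ - θ') * ∫⁻ t in Ioo θ' θ,
        ‖fderiv ℝ u (p + s • eang t) (s • eang (t + π/2))‖ₑ^2 := oneD hd hcd hle
    _ ≤ 7 * ∫⁻ t in Ioo (-π) π, ENNReal.ofReal s^2 * ‖fderiv ℝ u (p + s • eang t)‖ₑ^2 := by
      gcongr
      · calc ENNReal.ofReal (θ - θ') ≤ ENNReal.ofReal 7 := ENNReal.ofReal_le_ofReal hpi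
          _ = 7 := by simp
      · exact h.1.le
      · exact h'.2.le
      · calc _ ≤ (‖fderiv ℝ u (p + s • eang t)‖ₑ * ‖s • eang (t + π/2)‖ₑ)^2 :=
              pow_le_pow_left' (enorm_clm_le _ _) 2
          _ = _ := by
              rw [← ofReal_norm (s • eang (t + π/2)), norm_smul, eang_norm, mul_one,
                Real.norm_of_nonneg hs]
              ring
    _ = _ := by rw [lintegral_const_mul _ hm]; ring

lemma arc_est {u : E2 → ℝ} (hu : ContDiff ℝ (⊤ : ℕ∞) u) (p : E2) {s : ℝ} (hs : 0 ≤ s)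
    {θ θ' : ℝ} (h : θ' ∈ Ioo (-π) π) (h' : θ ∈ Ioo (-π) π) :
    ‖u (p + s • eang θ) - u (p + s • eang θ')‖ₑ^2 ≤
      7 * ENNReal.ofReal s^2 * ∫⁻ τ in Ioo (-π) π, ‖fderiv ℝ u (p + s • eang τ)‖ₑ^2 := by
  rcases le_total θ' θ with hle | hle
  · exact arc_est0 hu p hs h h' hle
  · rw [enorm_sub_rev]
    exact arc_est0 hu p hs h' h hle

lemma rad_est {u : E2 → ℝ} (hu : ContDiff ℝ (⊤ : ℕ∞) u) (p : E2) {a b : ℝ} (hab : a ≤ b) (θ : ℝ) :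
    ‖u (p + b • eang θ) - u (p + a • eang θ)‖ₑ^2 ≤
      ENNReal.ofReal (b - a) * ∫⁻ s in Ioo a b, ‖fderiv ℝ u (p + s • eang θ)‖ₑ^2 := by
  have hc : Continuous fun t : ℝ => fderiv ℝ u (p + t • eang θ) (eang θ) := by
    have h3 : Continuous fun t : ℝ => fderiv ℝ u (p + t • eang θ) := (cd_grad hu).comp (by fun_prop)
    exact h3.clm_apply continuous_const
  refine (oneD (f := fun t : ℝ => u (p + t • eang θ)) (hasDerivAt_line hu p (eang θ)) hc hab).trans ?_
  gcongr with s
  have := enorm_clm_le (fderiv ℝ u (p + s • eang θ)) (eang θ)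
  rwa [← ofReal_norm (eang θ), eang_norm, ENNReal.ofReal_one, mul_one] at this

lemma sq_add_le (x y : ℝ≥0∞) : (x + y)^2 ≤ 2 * x^2 + 2 * y^2 := by
  have := ENNReal.rpow_add_le_mul_rpow_add_rpow x y (p := 2) (by norm_num)
  norm_num at this
  rw [mul_add] at this
  exact_mod_cast this

lemma ann_poincare {u : E2 → ℝ} (hu : ContDiff ℝ (⊤ : ℕ∞) u) (p : E2) {a : ℝ} (ha : 0 < a) :
    ∃ m : ℝ, ∫⁻ x in ann p a (2 * a), ‖u x - m‖ₑ^2 ≤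
      420 * ENNReal.ofReal a^2 * ∫⁻ x in ann p a (2 * a), ‖fderiv ℝ u x‖ₑ^2 := by
  have hgm : Measurable fun x => ‖fderiv ℝ u x‖ₑ^2 := (meas_enorm_grad hu).pow_const 2
  set E := ∫⁻ x in ann p a (2 * a), ‖fderiv ℝ u x‖ₑ^2 with hE
  have hJm : Measurable fun θ => ∫⁻ s in Ioo a (2 * a), ‖fderiv ℝ u (p + s • eang θ)‖ₑ^2 :=
    Measurable.lintegral_prod_right' (f := fun z : ℝ × ℝ => ‖fderiv ℝ u (p + z.2 • eang z.1)‖ₑ^2)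
      (polar_meas_swap p hgm)
  have hvol : volume (Ioo (-π) π) = ENNReal.ofReal (2 * π) := by
    rw [Real.volume_Ioo]; congr 1; ring
  obtain ⟨θ', hθ', hJ⟩ := exists_le_setLAverage (μ := volume) (s := Ioo (-π) π)
    (by rw [hvol]; simp [Real.pi_pos]) (by rw [hvol]; exact ENNReal.ofReal_ne_top) hJm.aemeasurable
  rw [setLAverage_eq, hvol] at hJ
  set J := ∫⁻ s in Ioo a (2 * a), ‖fderiv ℝ u (p + s • eang θ')‖ₑ^2 with hJd
  have haJ : ENNReal.ofReal a * J ≤ E := by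
    have h1 : J * ENNReal.ofReal (2 * π) ≤ ∫⁻ θ in Ioo (-π) π, ∫⁻ s in Ioo a (2 * a),
        ‖fderiv ℝ u (p + s • eang θ)‖ₑ^2 :=
      (ENNReal.le_div_iff_mul_le (Or.inl (by simp [Real.pi_pos])) (Or.inl ENNReal.ofReal_ne_top)).mp hJ
    have h2 : J ≤ J * ENNReal.ofReal (2 * π) := by
      conv_lhs => rw [← mul_one J]
      gcongr
      rw [← ENNReal.ofReal_one]
      apply ENNReal.ofReal_le_ofReal
      have := Real.pi_gt_three; linarith
    have hsm : ∀ θ, Measurable fun s : ℝ => ‖fderiv ℝ u (p + s • eang θ)‖ₑ^2 := fun θ =>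
      polar_meas_s p hgm θ
    rw [hE, polar_ann_swap p hgm ha.le]
    calc _ ≤ ENNReal.ofReal a * ∫⁻ θ in Ioo (-π) π, ∫⁻ s in Ioo a (2 * a),
          ‖fderiv ℝ u (p + s • eang θ)‖ₑ^2 := by gcongr; exact h2.trans h1
      _ = ∫⁻ θ in Ioo (-π) π, ∫⁻ s in Ioo a (2 * a), ENNReal.ofReal a *
          ‖fderiv ℝ u (p + s • eang θ)‖ₑ^2 := by
        rw [← lintegral_const_mul _ hJm]
        refine lintegral_congr fun θ => ?_
        rw [lintegral_const_mul _ (hsm θ)]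
      _ ≤ _ := by
        refine lintegral_mono fun θ => setLIntegral_mono' measurableSet_Ioo fun s hs => ?_
        gcongr
        exact hs.1.le
  refine ⟨u (p + a • eang θ'), ?_⟩
  set m := u (p + a • eang θ') with hm
  set G : ℝ → ℝ≥0∞ := fun s => ∫⁻ θ in Ioo (-π) π, ‖fderiv ℝ u (p + s • eang θ)‖ₑ^2 with hG
  have hGm : Measurable G :=
    Measurable.lintegral_prod_right' (f := fun z : ℝ × ℝ => ‖fderiv ℝ u (p + z.1 • eang z.2)‖ₑ^2)
      (polar_meas p hgm)
  have hpt : ∀ s ∈ Ioo a (2 * a), ∀ θ ∈ Ioo (-π) π, ‖u (p + s • eang θ) - m‖ₑ^2 ≤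
      14 * ENNReal.ofReal s^2 * G s + 2 * E := by
    intro s hs θ hθ
    have hs0 : 0 ≤ s := (ha.trans hs.1).le
    have h1 := arc_est hu p hs0 hθ' hθ
    have h2 := rad_est hu p hs.1.le θ'
    have h3 : ENNReal.ofReal (s - a) * ∫⁻ s in Ioo a s, ‖fderiv ℝ u (p + s • eang θ')‖ₑ^2 ≤ E := by
      refine le_trans ?_ haJ
      gcongr
      · linarith [hs.2]
      · exact lintegral_mono_set (Ioo_subset_Ioo_right hs.2.le)
    have e : u (p + s • eang θ) - m = (u (p + s • eang θ) - u (p + s • eang θ'))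
        + (u (p + s • eang θ') - m) := by ring
    calc _ ≤ (‖u (p + s • eang θ) - u (p + s • eang θ')‖ₑ + ‖u (p + s • eang θ') - m‖ₑ)^2 := by
          rw [e]; exact pow_le_pow_left' (enorm_add_le _ _) 2
      _ ≤ 2 * ‖u (p + s • eang θ) - u (p + s • eang θ')‖ₑ^2
          + 2 * ‖u (p + s • eang θ') - m‖ₑ^2 := sq_add_le _ _
      _ ≤ 2 * (7 * ENNReal.ofReal s^2 * G s) + 2 * E := by
          gcongr
          exact h2.trans h3
      _ = _ := by ring
  have hvm : Measurable fun x => ‖u x - m‖ₑ^2 := by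
    have : ContDiff ℝ (⊤ : ℕ∞) fun x => u x - m := hu.sub contDiff_const
    exact (meas_enorm this).pow_const 2
  rw [polar_ann p hvm ha.le]
  have hpi7 : ENNReal.ofReal (2 * π) ≤ 7 := by
    calc ENNReal.ofReal (2 * π) ≤ ENNReal.ofReal 7 := by
          apply ENNReal.ofReal_le_ofReal; have := Real.pi_lt_d2; linarith
      _ = 7 := by simp
  have h2a : ENNReal.ofReal (2 * a) = 2 * ENNReal.ofReal a := by
    rw [ENNReal.ofReal_mul (by norm_num)]; simp
  have hEG : E = ∫⁻ s in Ioo a (2 * a), ENNReal.ofReal s * G s := by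
    rw [hE, polar_ann p hgm ha.le]
  calc _ ≤ ∫⁻ s in Ioo a (2 * a), (392 * ENNReal.ofReal a^2 * (ENNReal.ofReal s * G s)
          + 28 * ENNReal.ofReal a * E) := by
        refine setLIntegral_mono' measurableSet_Ioo fun s hs => ?_
        have hs2 : ENNReal.ofReal s ≤ 2 * ENNReal.ofReal a := by
          rw [← h2a]; exact ENNReal.ofReal_le_ofReal hs.2.le
        calc _ ≤ ENNReal.ofReal s * ∫⁻ θ in Ioo (-π) π, (14 * ENNReal.ofReal s^2 * G s + 2 * E) := by
              refine mul_le_mul_right ?_ _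
              exact setLIntegral_mono' measurableSet_Ioo (hpt s hs)
          _ = ENNReal.ofReal s * ((14 * ENNReal.ofReal s^2 * G s + 2 * E) * ENNReal.ofReal (2 * π)) := by
              rw [setLIntegral_const, hvol]
          _ = 14 * ENNReal.ofReal (2 * π) * ENNReal.ofReal s^2 * (ENNReal.ofReal s * G s)
              + 2 * ENNReal.ofReal (2 * π) * ENNReal.ofReal s * E := by ring
          _ ≤ 14 * 7 * (2 * ENNReal.ofReal a)^2 * (ENNReal.ofReal s * G s)
              + 2 * 7 * (2 * ENNReal.ofReal a) * E := by gcongr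
          _ = _ := by ring
    _ = 392 * ENNReal.ofReal a^2 * E + 28 * ENNReal.ofReal a * E * ENNReal.ofReal a := by
        rw [lintegral_add_right _ measurable_const, lintegral_const_mul _ (by fun_prop),
          setLIntegral_const, Real.volume_Ioo, ← hEG]
        congr 3; ring
    _ = _ := by ring

/-- Radial Poincare inequality for functions that vanish on the outer circle. -/
lemma rad_poincare {v : E2 → ℝ} (hv : ContDiff ℝ (⊤ : ℕ∞) v) (p : E2) {r b : ℝ} (hr : 0 ≤ r)
    (hb : 0 ≤ b) (h0 : ∀ x, dist x p = b → v x = 0) :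
    ∫⁻ x in ann p r b, ‖v x‖ₑ^2 ≤ ENNReal.ofReal b^2 * ∫⁻ x in ann p r b, ‖fderiv ℝ v x‖ₑ^2 := by
  have hgm : Measurable fun x => ‖fderiv ℝ v x‖ₑ^2 := (meas_enorm_grad hv).pow_const 2
  have hvm : Measurable fun x => ‖v x‖ₑ^2 := (meas_enorm hv).pow_const 2
  rw [polar_ann_swap p hvm hr, polar_ann_swap p hgm hr, ← lintegral_const_mul']
  swap
  · simp
  refine lintegral_mono fun θ => ?_
  obtain ⟨I, hI⟩ : ∃ I, I = ∫⁻ s in Ioo r b, ENNReal.ofReal s * ‖fderiv ℝ v (p + s • eang θ)‖ₑ^2 :=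
    ⟨_, rfl⟩
  rw [← hI]
  have hpt : ∀ s ∈ Ioo r b, ENNReal.ofReal s * ‖v (p + s • eang θ)‖ₑ^2 ≤ ENNReal.ofReal b * I := by
    intro s hs
    have h1 := rad_est hv p hs.2.le θ
    rw [h0 _ (dist_polar p hb θ), zero_sub, enorm_neg] at h1
    calc _ ≤ ENNReal.ofReal s * (ENNReal.ofReal (b - s) *
          ∫⁻ t in Ioo s b, ‖fderiv ℝ v (p + t • eang θ)‖ₑ^2) := by gcongr
      _ = ENNReal.ofReal (b - s) * ∫⁻ t in Ioo s b, ENNReal.ofReal s *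
          ‖fderiv ℝ v (p + t • eang θ)‖ₑ^2 := by
        rw [lintegral_const_mul' _ _ (by simp)]; ring
      _ ≤ ENNReal.ofReal b * ∫⁻ t in Ioo s b, ENNReal.ofReal t *
          ‖fderiv ℝ v (p + t • eang θ)‖ₑ^2 := by
        gcongr ENNReal.ofReal ?_ * ?_
        · linarith [hs.1]
        · refine setLIntegral_mono' measurableSet_Ioo fun t ht => ?_
          gcongr
          exact ht.1.le
      _ ≤ _ := by
        rw [hI]
        exact mul_le_mul_right (lintegral_mono_set (Ioo_subset_Ioo_left hs.1.le)) _
  calc _ ≤ ∫⁻ s in Ioo r b, ENNReal.ofReal b * I := setLIntegral_mono' measurableSet_Ioo hpt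
    _ = ENNReal.ofReal b * I * ENNReal.ofReal (b - r) := by
      rw [setLIntegral_const, Real.volume_Ioo]
    _ ≤ ENNReal.ofReal b * I * ENNReal.ofReal b := by gcongr; linarith
    _ = _ := by ring

lemma bmp_fd_in {p : E2} {a : ℝ} (ha : 0 < a) {x : E2} (hx : dist x p ≤ a) :
    fderiv ℝ (bmp p a) x = 0 := by
  apply IsLocalMax.fderiv_eq_zero
  refine Eventually.of_forall fun y => ?_
  rw [bmp_one ha hx]; exact bmp_le_one p a y

lemma bmp_fd_out {p : E2} {a : ℝ} (ha : 0 < a) {x : E2} (hx : 2 * a ≤ dist x p) :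
    fderiv ℝ (bmp p a) x = 0 := by
  apply IsLocalMin.fderiv_eq_zero
  refine Eventually.of_forall fun y => ?_
  rw [bmp_zero ha hx]; exact bmp_nonneg p a y

lemma dyadic_choice {F : E2 → ℝ≥0∞} (p : E2) {R r : ℝ} {K : ℕ} (hK : 0 < K)
    (hr : 0 < r) (hrR : r ≤ R / 2^K) :
    ∃ a, 0 < a ∧ r ≤ a ∧ 2 * a ≤ R ∧
      K * ∫⁻ x in ann p a (2 * a), F x ≤ ∫⁻ x in ann p r R, F x := by
  have hR : 0 < R := by
    by_contra h; push Not at h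
    have : R / 2^K ≤ 0 := div_nonpos_of_nonpos_of_nonneg h (by positivity)
    linarith
  set a : ℕ → ℝ := fun j => R / 2^(j+1) with hadef
  have ha2 : ∀ j, 2 * a j = R / 2^j := fun j => by simp only [hadef]; rw [pow_succ]; field_simp
  have ha0 : ∀ j, 0 < a j := fun j => by positivity
  have hanti : ∀ i j, i ≤ j → R / 2^j ≤ R / 2^i := fun i j hij => by
    gcongr
    norm_num
  have har : ∀ j, j < K → r ≤ a j := fun j hj => hrR.trans (hanti (j+1) K hj)
  have haR : ∀ j, 2 * a j ≤ R := fun j => by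
    rw [ha2]; simpa using hanti 0 j (Nat.zero_le _)
  obtain ⟨j, hj, hmin⟩ := Finset.exists_min_image (Finset.range K)
    (fun j => ∫⁻ x in ann p (a j) (2 * a j), F x) ⟨0, by simpa using hK⟩
  rw [Finset.mem_range] at hj
  refine ⟨a j, ha0 j, har j hj, haR j, ?_⟩
  have h1 := Finset.card_nsmul_le_sum (Finset.range K)
    (fun j => ∫⁻ x in ann p (a j) (2 * a j), F x) _ hmin
  rw [Finset.card_range, nsmul_eq_mul] at h1
  refine h1.trans ?_
  rw [← lintegral_biUnion_finset]
  · apply lintegral_mono_set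
    intro x hx
    simp only [Set.mem_iUnion, Finset.mem_range] at hx
    obtain ⟨i, hi, hx1, hx2⟩ := hx
    exact ⟨(har i hi).trans_lt hx1, hx2.trans_le (haR i)⟩
  · have key : ∀ i j, i < j → Disjoint (ann p (a i) (2 * a i)) (ann p (a j) (2 * a j)) := by
      intro i j hij
      rw [Set.disjoint_left]
      rintro x ⟨h1, -⟩ ⟨-, h2⟩
      rw [ha2] at h2
      have : R / 2^j ≤ a i := hanti (i+1) j hij
      linarith
    intro i _ j _ hij
    rcases lt_or_gt_of_ne hij with h | h
    · exact key i j h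
    · exact (key j i h).symm
  · intro i _; exact ann_meas _ _ _

lemma one_hole : ∃ C : ℝ≥0, ∀ (u : E2 → ℝ), ContDiff ℝ (⊤ : ℕ∞) u → ∀ (p : E2) (R r : ℝ) (K : ℕ),
    0 < K → 0 < r → r ≤ R / 2^K → ∃ a m : ℝ, 0 < a ∧ r ≤ a ∧ 2 * a ≤ R ∧
      K * ∫⁻ x in ann p a (2 * a), (‖fderiv ℝ u x‖ₑ^2
          + 2 * (‖fderiv ℝ (bmp p a) x‖ₑ^2 * ‖u x - m‖ₑ^2))
        ≤ C * ∫⁻ x in ann p r R, ‖fderiv ℝ u x‖ₑ^2 ∧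
      ∫⁻ x in ann p r (2 * a), ‖bmp p a x * (u x - m)‖ₑ^2
        ≤ C * ENNReal.ofReal R^2 * ∫⁻ x in ann p r R, ‖fderiv ℝ u x‖ₑ^2 := by
  obtain ⟨L, hL, hgrad⟩ := bmp_grad
  set ℓ : ℝ≥0 := Real.toNNReal L with hℓ
  refine ⟨2 + 840 * ℓ^2, ?_⟩
  intro u hu p R r K hK hr hrR
  obtain ⟨a, ha, hra, haR, hE⟩ := dyadic_choice (F := fun x => ‖fderiv ℝ u x‖ₑ^2) p hK hr hrR
  obtain ⟨m, hm⟩ := ann_poincare hu p ha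
  refine ⟨a, m, ha, hra, haR, ?_, ?_⟩
  all_goals
    have hβ : ∀ x, ‖fderiv ℝ (bmp p a) x‖ₑ ≤ ENNReal.ofReal (L / a) := fun x => by
      rw [← ofReal_norm]; exact ENNReal.ofReal_le_ofReal (hgrad p a ha x)
    have hLa : ENNReal.ofReal (L / a)^2 * ENNReal.ofReal a^2 = (ℓ:ℝ≥0∞)^2 := by
      rw [← mul_pow, ← ENNReal.ofReal_mul (by positivity), div_mul_cancel₀ _ ha.ne']; rfl
    have hgm : Measurable fun x => ‖fderiv ℝ u x‖ₑ^2 := (meas_enorm_grad hu).pow_const 2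
    have hw : ContDiff ℝ (⊤ : ℕ∞) fun x => u x - m := hu.sub contDiff_const
    have hA : ∫⁻ x in ann p a (2 * a), 2 * (‖fderiv ℝ (bmp p a) x‖ₑ^2 * ‖u x - m‖ₑ^2)
        ≤ 840 * (ℓ:ℝ≥0∞)^2 * ∫⁻ x in ann p a (2 * a), ‖fderiv ℝ u x‖ₑ^2 := by
      calc _ ≤ ∫⁻ x in ann p a (2 * a), 2 * ENNReal.ofReal (L / a)^2 * ‖u x - m‖ₑ^2 := by
            refine lintegral_mono fun x => ?_
            rw [mul_assoc]
            gcongr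
            exact hβ x
        _ = 2 * ENNReal.ofReal (L / a)^2 * ∫⁻ x in ann p a (2 * a), ‖u x - m‖ₑ^2 := by
            rw [lintegral_const_mul _ ((meas_enorm hw).pow_const 2)]
        _ ≤ 2 * ENNReal.ofReal (L / a)^2 * (420 * ENNReal.ofReal a^2 *
              ∫⁻ x in ann p a (2 * a), ‖fderiv ℝ u x‖ₑ^2) := by gcongr
        _ = 840 * (ENNReal.ofReal (L / a)^2 * ENNReal.ofReal a^2) *
              ∫⁻ x in ann p a (2 * a), ‖fderiv ℝ u x‖ₑ^2 := by ring
        _ = _ := by rw [hLa]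
  · rw [lintegral_add_left hgm]
    calc _ ≤ K * ((∫⁻ x in ann p a (2 * a), ‖fderiv ℝ u x‖ₑ^2)
            + 840 * (ℓ:ℝ≥0∞)^2 * ∫⁻ x in ann p a (2 * a), ‖fderiv ℝ u x‖ₑ^2) := by gcongr
      _ = (1 + 840 * (ℓ:ℝ≥0∞)^2) * (K * ∫⁻ x in ann p a (2 * a), ‖fderiv ℝ u x‖ₑ^2) := by ring
      _ ≤ (2 + 840 * (ℓ:ℝ≥0∞)^2) * ∫⁻ x in ann p r R, ‖fderiv ℝ u x‖ₑ^2 := by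
          gcongr
          norm_num
      _ = _ := by push_cast; rfl
  · have hv : ContDiff ℝ (⊤ : ℕ∞) fun x => bmp p a x * (u x - m) := (bmp_smooth p a).mul hw
    have h1 := rad_poincare hv p hr.le (b := 2 * a) (by linarith) (fun x hx => by
      rw [bmp_zero ha hx.ge, zero_mul])
    refine h1.trans ?_
    have hpt : ∀ x, ‖fderiv ℝ (fun x => bmp p a x * (u x - m)) x‖ₑ^2 ≤ 2 * ‖fderiv ℝ u x‖ₑ^2
        + (ann p a (2 * a)).indicator
          (fun x => 2 * (‖fderiv ℝ (bmp p a) x‖ₑ^2 * ‖u x - m‖ₑ^2)) x := by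
      intro x
      have hd : fderiv ℝ (fun x => bmp p a x * (u x - m)) x
          = bmp p a x • fderiv ℝ u x + (u x - m) • fderiv ℝ (bmp p a) x := by
        have d1 := ((bmp_smooth p a).differentiable (by simp) x).hasFDerivAt
        have d2 := ((hu.differentiable (by simp) x).hasFDerivAt).sub_const m
        exact (d1.mul d2).fderiv
      have hb1 : ‖bmp p a x‖ₑ ≤ 1 := by
        rw [← ofReal_norm, ← ENNReal.ofReal_one]
        apply ENNReal.ofReal_le_ofReal
        rw [Real.norm_of_nonneg (bmp_nonneg p a x)]; exact bmp_le_one p a x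
      have hb2 : ‖bmp p a x • fderiv ℝ u x‖ₑ ≤ ‖fderiv ℝ u x‖ₑ := by
        rw [enorm_smul]
        calc _ ≤ 1 * ‖fderiv ℝ u x‖ₑ := by gcongr
          _ = _ := one_mul _
      calc _ ≤ (‖bmp p a x • fderiv ℝ u x‖ₑ + ‖(u x - m) • fderiv ℝ (bmp p a) x‖ₑ)^2 := by
            rw [hd]
            have h3 := enorm_add_le (bmp p a x • fderiv ℝ u x) ((u x - m) • fderiv ℝ (bmp p a) x)
            exact pow_le_pow_left' h3 2
        _ ≤ 2 * ‖bmp p a x • fderiv ℝ u x‖ₑ^2 + 2 * ‖(u x - m) • fderiv ℝ (bmp p a) x‖ₑ^2 :=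
            sq_add_le _ _
        _ ≤ _ := by
            gcongr
            by_cases hx : x ∈ ann p a (2 * a)
            · rw [indicator_of_mem hx, enorm_smul, mul_pow, mul_comm (‖u x - m‖ₑ^2)]
            · rw [indicator_of_notMem hx]
              have : fderiv ℝ (bmp p a) x = 0 := by
                by_cases h : dist x p ≤ a
                · exact bmp_fd_in ha h
                · apply bmp_fd_out ha
                  by_contra h'
                  push Not at h h'
                  exact hx ⟨h, h'⟩
              rw [this, smul_zero, ← ofReal_norm]; simp
    have hsub1 : ann p r (2 * a) ⊆ ann p r R := fun x hx => ⟨hx.1, hx.2.trans_le haR⟩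
    have hsub2 : ann p a (2 * a) ⊆ ann p r R := fun x hx =>
      ⟨hra.trans_lt hx.1, hx.2.trans_le haR⟩
    calc _ ≤ ENNReal.ofReal R^2 * ∫⁻ x in ann p r (2 * a), (2 * ‖fderiv ℝ u x‖ₑ^2
        + (ann p a (2 * a)).indicator
          (fun x => 2 * (‖fderiv ℝ (bmp p a) x‖ₑ^2 * ‖u x - m‖ₑ^2)) x) := by
          gcongr with x
          exact hpt x
      _ ≤ ENNReal.ofReal R^2 * (2 * (∫⁻ x in ann p r R, ‖fderiv ℝ u x‖ₑ^2) +
          840 * (ℓ:ℝ≥0∞)^2 * ∫⁻ x in ann p r R, ‖fderiv ℝ u x‖ₑ^2) := by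
          refine mul_le_mul_right ?_ _
          rw [lintegral_add_left (hgm.const_mul 2), lintegral_const_mul _ hgm]
          refine add_le_add (mul_le_mul_right (lintegral_mono_set hsub1) _) ?_
          refine (setLIntegral_le_lintegral _ _).trans ?_
          rw [lintegral_indicator (ann_meas _ _ _)]
          refine hA.trans ?_
          exact mul_le_mul_right (lintegral_mono_set hsub2) _
      _ = _ := by push_cast; ring

lemma fill_holes : ∃ C : ℝ≥0, ∀ (Ω : Set E2), IsOpen Ω → ∀ (u : E2 → ℝ), ContDiff ℝ (⊤ : ℕ∞) u →
    ∀ (P : Finset E2) (R r : ℝ) (K : ℕ), GoodPack Ω P R → 0 < K → 0 < r → r ≤ R / 2^K →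
    ∃ w : E2 → ℝ, ContDiff ℝ (⊤ : ℕ∞) w ∧
      K * ∫⁻ x in Ω, ‖fderiv ℝ w x‖ₑ^2 ≤ (K + C) * ∫⁻ x in perf Ω P r, ‖fderiv ℝ u x‖ₑ^2 ∧
      ∫⁻ x in perf Ω P r, ‖w x - u x‖ₑ^2 ≤
        C * ENNReal.ofReal R^2 * ∫⁻ x in perf Ω P r, ‖fderiv ℝ u x‖ₑ^2 := by
  obtain ⟨C, hC⟩ := one_hole
  refine ⟨C, ?_⟩
  intro Ω ho u hu P R r K hP hK hr hrR
  have hC2 := fun p => hC u hu p R r K hK hr hrR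
  choose a m ha hra haR hE hV using hC2
  obtain ⟨hPin, hPsep, -⟩ := hP
  have hpm : MeasurableSet (perf Ω P r) := (perf_open ho P r).measurableSet
  have hgm : Measurable fun x => ‖fderiv ℝ u x‖ₑ^2 := (meas_enorm_grad hu).pow_const 2
  have hfar : ∀ x, ∀ p ∈ P, dist x p ≤ R → ∀ q ∈ P, q ≠ p → R < dist x q := by
    intro x p hp hxp q hq hqp
    have h1 := hPsep q hq p hp hqp
    have h2 := dist_triangle q x p
    rw [dist_comm q x] at h2
    linarith
  have hsum : ∑ p ∈ P, ∫⁻ x in ann p r R, ‖fderiv ℝ u x‖ₑ^2 ≤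
      ∫⁻ x in perf Ω P r, ‖fderiv ℝ u x‖ₑ^2 := by
    rw [← lintegral_biUnion_finset]
    · apply lintegral_mono_set
      intro x hx
      simp only [Set.mem_iUnion] at hx
      obtain ⟨p, hp, hx1, hx2⟩ := hx
      rw [mem_perf]
      refine ⟨hPin p hp (Metric.mem_closedBall.mpr hx2.le), fun q hq => ?_⟩
      by_cases hqp : q = p
      · rw [hqp]; exact hx1
      · have := hfar x p hp hx2.le q hq hqp
        linarith
    · intro p hp q hq hpq
      show Disjoint (ann p r R) (ann q r R)
      rw [Set.disjoint_left]
      rintro x ⟨-, h1⟩ ⟨-, h2⟩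
      have := hfar x p hp h1.le q hq hpq.symm
      linarith
    · intro i _; exact ann_meas _ _ _
  set W : E2 → E2 → ℝ := fun p x => bmp p (a p) x * (u x - m p) with hW
  have hWs : ∀ p, ContDiff ℝ (⊤ : ℕ∞) (W p) := fun p =>
    (bmp_smooth p (a p)).mul (hu.sub contDiff_const)
  have hWd : ∀ p x, fderiv ℝ (W p) x = bmp p (a p) x • fderiv ℝ u x
      + (u x - m p) • fderiv ℝ (bmp p (a p)) x := by
    intro p x
    have d1 := ((bmp_smooth p (a p)).differentiable (by simp) x).hasFDerivAt
    have d2 := ((hu.differentiable (by simp) x).hasFDerivAt).sub_const (m p)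
    exact (d1.mul d2).fderiv
  have hW0 : ∀ p x, 2 * a p ≤ dist x p → W p x = 0 := fun p x h => by
    simp only [hW]; rw [bmp_zero (ha p) h, zero_mul]
  have hWd0 : ∀ p x, 2 * a p ≤ dist x p → fderiv ℝ (W p) x = 0 := fun p x h => by
    rw [hWd, bmp_zero (ha p) h, bmp_fd_out (ha p) h, zero_smul, smul_zero, add_zero]
  have hws : ContDiff ℝ (⊤ : ℕ∞) fun x => u x - ∑ p ∈ P, W p x :=
    hu.sub (ContDiff.sum fun p _ => hWs p)
  have hwd : ∀ x, fderiv ℝ (fun x => u x - ∑ p ∈ P, W p x) x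
      = fderiv ℝ u x - ∑ p ∈ P, fderiv ℝ (W p) x := by
    intro x
    have d1 : HasFDerivAt (fun x => ∑ p ∈ P, W p x) (∑ p ∈ P, fderiv ℝ (W p) x) x :=
      HasFDerivAt.fun_sum fun p _ => ((hWs p).differentiable (by simp) x).hasFDerivAt
    exact ((hu.differentiable (by simp) x).hasFDerivAt.sub d1).fderiv
  set D : E2 → E2 → ℝ≥0∞ := fun p x => ‖fderiv ℝ u x‖ₑ^2
          + 2 * (‖fderiv ℝ (bmp p (a p)) x‖ₑ^2 * ‖u x - m p‖ₑ^2) with hD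
  have hDm : ∀ p, Measurable (D p) := fun p =>
    hgm.add ((((meas_enorm_grad (bmp_smooth p (a p))).pow_const 2).mul
      ((meas_enorm (hu.sub contDiff_const)).pow_const 2)).const_mul 2)
  have hG : ∀ x ∈ Ω, ‖fderiv ℝ (fun x => u x - ∑ p ∈ P, W p x) x‖ₑ^2 ≤
      (perf Ω P r).indicator (fun x => ‖fderiv ℝ u x‖ₑ^2) x
        + ∑ p ∈ P, (ann p (a p) (2 * a p)).indicator (D p) x := by
    intro x hx
    rw [hwd]
    by_cases hex : ∃ p ∈ P, dist x p < 2 * a p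
    · obtain ⟨p, hp, hxp⟩ := hex
      have hf : ∀ q ∈ P, q ≠ p → R < dist x q := hfar x p hp (hxp.le.trans (haR p))
      rw [Finset.sum_eq_single p (fun q hq hqp => hWd0 q x ((haR q).trans (hf q hq hqp).le))
        (fun h => absurd hp h), hWd]
      by_cases hxa : dist x p ≤ a p
      · rw [bmp_one (ha p) hxa, bmp_fd_in (ha p) hxa, one_smul, smul_zero, add_zero, sub_self,
          ← ofReal_norm]
        simp
      · push Not at hxa
        have hxann : x ∈ ann p (a p) (2 * a p) := ⟨hxa, hxp⟩
        have hxperf : x ∈ perf Ω P r := by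
          rw [mem_perf]
          refine ⟨hx, fun q hq => ?_⟩
          by_cases hqp : q = p
          · rw [hqp]; exact (hra p).trans_lt hxa
          · have h1 := hf q hq hqp
            have h2 := haR p
            have h3 := hra p
            have h4 := ha p
            linarith
        have hle : D p x ≤ ∑ p ∈ P, (ann p (a p) (2 * a p)).indicator (D p) x := by
          have := Finset.single_le_sum (f := fun p => (ann p (a p) (2 * a p)).indicator (D p) x)
            (fun q _ => zero_le) hp
          simpa only [indicator_of_mem hxann] using this
        rw [indicator_of_mem hxperf]
        refine le_trans ?_ (add_le_add_right hle _)
        have e : fderiv ℝ u x - (bmp p (a p) x • fderiv ℝ u x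
            + (u x - m p) • fderiv ℝ (bmp p (a p)) x)
            = (1 - bmp p (a p) x) • fderiv ℝ u x + (-(u x - m p)) • fderiv ℝ (bmp p (a p)) x := by
          module
        rw [e]
        have h3 := enorm_add_le ((1 - bmp p (a p) x) • fderiv ℝ u x)
          ((-(u x - m p)) • fderiv ℝ (bmp p (a p)) x)
        have hb1 : ‖1 - bmp p (a p) x‖ₑ ≤ 1 := by
          rw [← ofReal_norm, ← ENNReal.ofReal_one]
          apply ENNReal.ofReal_le_ofReal
          have h5 := bmp_le_one p (a p) x
          have h6 := bmp_nonneg p (a p) x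
          rw [Real.norm_of_nonneg (by linarith)]; linarith
        rw [enorm_smul, enorm_smul, enorm_neg] at h3
        calc _ ≤ (‖1 - bmp p (a p) x‖ₑ * ‖fderiv ℝ u x‖ₑ
              + ‖u x - m p‖ₑ * ‖fderiv ℝ (bmp p (a p)) x‖ₑ)^2 := pow_le_pow_left' h3 2
          _ ≤ 2 * (‖1 - bmp p (a p) x‖ₑ * ‖fderiv ℝ u x‖ₑ)^2
              + 2 * (‖u x - m p‖ₑ * ‖fderiv ℝ (bmp p (a p)) x‖ₑ)^2 := sq_add_le _ _
          _ ≤ 2 * (1 * ‖fderiv ℝ u x‖ₑ)^2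
              + 2 * (‖u x - m p‖ₑ * ‖fderiv ℝ (bmp p (a p)) x‖ₑ)^2 := by gcongr
          _ = _ := by simp only [hD]; ring
    · push Not at hex
      rw [Finset.sum_eq_zero (fun q hq => hWd0 q x (hex q hq)), sub_zero]
      have hxperf : x ∈ perf Ω P r := by
        rw [mem_perf]
        refine ⟨hx, fun q hq => ?_⟩
        have h1 := hex q hq
        have h3 := hra q
        have h4 := ha q
        linarith
      rw [indicator_of_mem hxperf]
      exact le_self_add
  have hVp : ∀ x ∈ perf Ω P r, ‖(u x - ∑ p ∈ P, W p x) - u x‖ₑ^2 ≤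
      ∑ p ∈ P, (ann p r (2 * a p)).indicator (fun x => ‖W p x‖ₑ^2) x := by
    intro x hx
    rw [sub_sub_cancel_left, enorm_neg]
    by_cases hex : ∃ p ∈ P, dist x p < 2 * a p
    · obtain ⟨p, hp, hxp⟩ := hex
      have hf : ∀ q ∈ P, q ≠ p → R < dist x q := hfar x p hp (hxp.le.trans (haR p))
      rw [Finset.sum_eq_single p (fun q hq hqp => hW0 q x ((haR q).trans (hf q hq hqp).le))
        (fun h => absurd hp h)]
      have hxann : x ∈ ann p r (2 * a p) := ⟨((mem_perf).mp hx).2 p hp, hxp⟩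
      have := Finset.single_le_sum
        (f := fun p => (ann p r (2 * a p)).indicator (fun x => ‖W p x‖ₑ^2) x)
        (fun q _ => zero_le) hp
      simpa only [indicator_of_mem hxann] using this
    · push Not at hex
      rw [Finset.sum_eq_zero (fun q hq => hW0 q x (hex q hq))]
      simp
  refine ⟨fun x => u x - ∑ p ∈ P, W p x, hws, ?_, ?_⟩
  · have h1 : ∫⁻ x in Ω, ‖fderiv ℝ (fun x => u x - ∑ p ∈ P, W p x) x‖ₑ^2 ≤
        (∫⁻ x in perf Ω P r, ‖fderiv ℝ u x‖ₑ^2)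
        + ∑ p ∈ P, ∫⁻ x in ann p (a p) (2 * a p), D p x := by
      calc _ ≤ ∫⁻ x in Ω, ((perf Ω P r).indicator (fun x => ‖fderiv ℝ u x‖ₑ^2) x
            + ∑ p ∈ P, (ann p (a p) (2 * a p)).indicator (D p) x) :=
            setLIntegral_mono' ho.measurableSet hG
        _ ≤ ∫⁻ x, ((perf Ω P r).indicator (fun x => ‖fderiv ℝ u x‖ₑ^2) x
            + ∑ p ∈ P, (ann p (a p) (2 * a p)).indicator (D p) x) := setLIntegral_le_lintegral _ _
        _ = _ := by
            rw [lintegral_add_left (hgm.indicator hpm), lintegral_indicator hpm,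
              lintegral_finsetSum _ (fun p _ => (hDm p).indicator (ann_meas _ _ _))]
            congr 1
            refine Finset.sum_congr rfl fun p _ => ?_
            rw [lintegral_indicator (ann_meas _ _ _)]
    calc _ ≤ K * ((∫⁻ x in perf Ω P r, ‖fderiv ℝ u x‖ₑ^2)
        + ∑ p ∈ P, ∫⁻ x in ann p (a p) (2 * a p), D p x) := mul_le_mul_right h1 _
      _ = K * (∫⁻ x in perf Ω P r, ‖fderiv ℝ u x‖ₑ^2)
        + ∑ p ∈ P, K * ∫⁻ x in ann p (a p) (2 * a p), D p x := by
          rw [mul_add, Finset.mul_sum]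
      _ ≤ K * (∫⁻ x in perf Ω P r, ‖fderiv ℝ u x‖ₑ^2)
        + ∑ p ∈ P, C * ∫⁻ x in ann p r R, ‖fderiv ℝ u x‖ₑ^2 :=
          add_le_add_right (Finset.sum_le_sum fun p _ => hE p) _
      _ ≤ K * (∫⁻ x in perf Ω P r, ‖fderiv ℝ u x‖ₑ^2)
        + C * ∫⁻ x in perf Ω P r, ‖fderiv ℝ u x‖ₑ^2 := by
          rw [← Finset.mul_sum]
          exact add_le_add_right (mul_le_mul_right hsum _) _
      _ = _ := by ring
  · calc _ ≤ ∫⁻ x in perf Ω P r, ∑ p ∈ P, (ann p r (2 * a p)).indicator (fun x => ‖W p x‖ₑ^2) x :=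
          setLIntegral_mono' hpm hVp
      _ ≤ ∫⁻ x, ∑ p ∈ P, (ann p r (2 * a p)).indicator (fun x => ‖W p x‖ₑ^2) x :=
          setLIntegral_le_lintegral _ _
      _ = ∑ p ∈ P, ∫⁻ x in ann p r (2 * a p), ‖W p x‖ₑ^2 := by
          rw [lintegral_finsetSum _ (fun p _ =>
            ((meas_enorm (hWs p)).pow_const 2).indicator (ann_meas _ _ _))]
          refine Finset.sum_congr rfl fun p _ => ?_
          rw [lintegral_indicator (ann_meas _ _ _)]
      _ ≤ ∑ p ∈ P, C * ENNReal.ofReal R^2 * ∫⁻ x in ann p r R, ‖fderiv ℝ u x‖ₑ^2 :=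
          Finset.sum_le_sum fun p _ => hV p
      _ ≤ _ := by
          rw [← Finset.mul_sum]
          exact mul_le_mul_right hsum _

lemma fill_real : ∃ C : ℝ, 0 ≤ C ∧ ∀ (Ω : Set E2), IsOpen Ω → Bornology.IsBounded Ω →
    ∀ (u : E2 → ℝ), ContDiff ℝ (⊤ : ℕ∞) u →
    ∀ (P : Finset E2) (R r : ℝ) (K : ℕ), GoodPack Ω P R → 0 < K → 0 < r → r ≤ R / 2^K →
    ∃ w : E2 → ℝ, ContDiff ℝ (⊤ : ℕ∞) w ∧
      K * ∫ x in Ω, ‖fderiv ℝ w x‖^2 ≤ (K + C) * ∫ x in perf Ω P r, ‖fderiv ℝ u x‖^2 ∧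
      ∫ x in perf Ω P r, (w x - u x)^2 ≤
        C * R^2 * ∫ x in perf Ω P r, ‖fderiv ℝ u x‖^2 := by
  obtain ⟨C, hC⟩ := fill_holes
  refine ⟨C, C.2, ?_⟩
  intro Ω ho hb u hu P R r K hP hK hr hrR
  obtain ⟨w, hw, h1, h2⟩ := hC Ω ho u hu P R r K hP hK hr hrR
  refine ⟨w, hw, ?_, ?_⟩
  all_goals
    have hR : 0 ≤ R := by
      by_contra h; push Not at h
      have : R / 2^K ≤ 0 := div_nonpos_of_nonpos_of_nonneg h.le (by positivity)
      linarith
    have hfin : ∫⁻ x in perf Ω P r, ‖fderiv ℝ u x‖ₑ^2 ≠ ⊤ := by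
      have h3 := (cont_intOn (hb.subset (perf_subset Ω P r)) (cont_gradsq hu)).lintegral_lt_top
      simp_rw [ofReal_norm_sq_eq] at h3
      exact h3.ne
  · rw [int_normsq_eq_lint (cd_grad hw), int_normsq_eq_lint (cd_grad hu)]
    have h3 := ENNReal.toReal_mono (ENNReal.mul_ne_top (by simp) hfin) h1
    rw [ENNReal.toReal_mul, ENNReal.toReal_mul, ENNReal.toReal_add (by simp) (by simp)] at h3
    simpa using h3
  · rw [int_sq_eq_lint (u := fun x => w x - u x) (hw.continuous.sub hu.continuous), int_normsq_eq_lint (cd_grad hu)]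
    have h3 := ENNReal.toReal_mono (ENNReal.mul_ne_top
      (ENNReal.mul_ne_top (by simp) (by simp)) hfin) h2
    rw [ENNReal.toReal_mul, ENNReal.toReal_mul, ENNReal.toReal_pow, ENNReal.toReal_ofReal hR] at h3
    simpa using h3

lemma neu_arith {μ δ θ τ C R E N I J : ℝ} (hμ0 : 0 ≤ μ) (hθ0 : 0 < θ) (hθμ : θ * μ ≤ δ)
    (hτ0 : 0 < τ) (hτ1 : τ ≤ 1) (hτθ : 4 * τ ≤ θ) (hAR : (1 + 1 / τ) * μ * C * R^2 ≤ τ)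
    (hE0 : 0 ≤ E) (hN : 0 ≤ N) (hstep : N ≤ (1 + τ) * I + (1 + 1 / τ) * J)
    (e1 : μ * I ≤ (1 + τ) * E) (h2 : J ≤ C * R^2 * E) : (μ - δ) * N ≤ E := by
  have h9 : μ * N ≤ (1 + θ) * E := by
    calc μ * N ≤ μ * ((1 + τ) * I + (1 + 1 / τ) * J) := mul_le_mul_of_nonneg_left hstep hμ0
      _ = (1 + τ) * (μ * I) + (1 + 1 / τ) * μ * J := by ring
      _ ≤ (1 + τ) * ((1 + τ) * E) + (1 + 1 / τ) * μ * (C * R^2 * E) := by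
          have e2 : (1 + τ) * (μ * I) ≤ (1 + τ) * ((1 + τ) * E) :=
            mul_le_mul_of_nonneg_left e1 (by positivity)
          have e3 : (1 + 1 / τ) * μ * J ≤ (1 + 1 / τ) * μ * (C * R^2 * E) :=
            mul_le_mul_of_nonneg_left h2 (by positivity)
          linarith
      _ = ((1 + τ)^2 + (1 + 1 / τ) * μ * C * R^2) * E := by ring
      _ ≤ (1 + θ) * E := by
          refine mul_le_mul_of_nonneg_right ?_ hE0
          have e1 : τ^2 ≤ τ := by nlinarith
          have e2 : (1 + τ)^2 = 1 + 2 * τ + τ^2 := by ring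
          linarith
  have h10 : (μ - δ) * N * (1 + θ) ≤ E * (1 + θ) := by
    have hδ : 0 ≤ δ := le_trans (by positivity) hθμ
    have h11 : (μ - δ) * (1 + θ) ≤ μ := by nlinarith [mul_nonneg hδ hθ0.le]
    have h12 := mul_le_mul_of_nonneg_right h11 hN
    calc (μ - δ) * N * (1 + θ) = (μ - δ) * (1 + θ) * N := by ring
      _ ≤ μ * N := h12
      _ ≤ _ := by linarith
  exact le_of_mul_le_mul_right h10 (by positivity)

lemma neu_lower {Ω : Set E2} (ho : IsOpen Ω) (hne : Ω.Nonempty) (hb : Bornology.IsBounded Ω)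
    {δ : ℝ} (hδ : 0 < δ) : ∃ K₀ : ℕ, 0 < K₀ ∧ ∃ R₀ > 0, ∀ K : ℕ, K₀ ≤ K → ∀ R, 0 < R → R ≤ R₀ →
      ∀ P, GoodPack Ω P R → ∀ r, 0 < r → r ≤ R / 2^K → (perf Ω P r).Nonempty →
      nEig1 Ω - δ ≤ nEig1 (perf Ω P r) := by
  obtain ⟨C, hC0, hC⟩ := fill_real
  set μ := nEig1 Ω with hμ
  have hμ0 : 0 ≤ μ := nEig1_nonneg Ω
  set θ := δ / (μ + 1) with hθ
  have hθ0 : 0 < θ := by positivity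
  have hθμ : θ * μ ≤ δ := by
    have : θ * (μ + 1) = δ := by rw [hθ]; field_simp
    nlinarith
  set τ := min 1 (θ / 4) with hτ
  have hτ0 : 0 < τ := lt_min one_pos (by positivity)
  have hτ1 : τ ≤ 1 := min_le_left _ _
  have hτθ : 4 * τ ≤ θ := by have : τ ≤ θ / 4 := min_le_right _ _; linarith
  obtain ⟨K₁, hK₁⟩ := exists_nat_ge (C / τ)
  set A := (1 + 1 / τ) * μ * C with hA
  have hA0 : 0 ≤ A := by positivity
  have hR0 : 0 < min 1 (τ / (A + 1)) := lt_min one_pos (by positivity)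
  refine ⟨K₁ + 1, Nat.succ_pos _, min 1 (τ / (A + 1)), hR0, ?_⟩
  intro K hK R hR hRle P hP r hr hrR hnep
  have hK0 : 0 < K := lt_of_lt_of_le (Nat.succ_pos _) hK
  have hKr : (0:ℝ) < K := by exact_mod_cast hK0
  have hCK : C ≤ τ * K := by
    have h1 : (K₁ : ℝ) + 1 ≤ K := by exact_mod_cast hK
    have h2 : C / τ ≤ K := by linarith
    rw [div_le_iff₀ hτ0] at h2
    linarith
  have hAR : A * R^2 ≤ τ := by
    have h1 : R ≤ 1 := hRle.trans (min_le_left _ _)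
    have h2 : R ≤ τ / (A + 1) := hRle.trans (min_le_right _ _)
    rw [le_div_iff₀ (by positivity)] at h2
    have h3 : R^2 ≤ R := by nlinarith
    nlinarith [mul_le_mul_of_nonneg_left h3 hA0]
  have hpb : Bornology.IsBounded (perf Ω P r) := hb.subset (perf_subset Ω P r)
  have hpo := perf_open ho P r
  rw [nEig1_eq (perf Ω P r)]
  apply le_csInf (nSet_nonempty hpo hnep hpb)
  rintro _ ⟨u, hu, hmean, hn0, rfl⟩
  set N := ∫ x in perf Ω P r, (u x)^2 with hN
  have hNpos : 0 < N := lt_of_le_of_ne (int_sq_nonneg u _) (Ne.symm hn0)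
  rw [le_div_iff₀ hNpos]
  obtain ⟨w, hw, h1, h2⟩ := hC Ω ho hb u hu P R r K hP hK0 hr hrR
  set E := ∫ x in perf Ω P r, ‖fderiv ℝ u x‖^2 with hE
  have hE0 : 0 ≤ E := integral_nonneg fun x => sq_nonneg _
  have hV := vol_pos ho hne hb
  set c := (∫ x in Ω, w x) / (volume Ω).toReal with hc
  have hwc : ContDiff ℝ (⊤ : ℕ∞) fun x => w x - c := hw.sub contDiff_const
  have hm0 : ∫ x in Ω, (w x - c) = 0 := by
    rw [int_sub_const hb hw.continuous, hc]; field_simp; ring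
  have h3 := nEig1_mul_le hwc hm0
  have h4 : (fun x => ‖fderiv ℝ (fun x => w x - c) x‖^2) = fun x => ‖fderiv ℝ w x‖^2 := by
    funext x; rw [fderiv_sub_const]
  rw [h4, ← hμ] at h3
  have h5 : ∫ x in perf Ω P r, (w x - c)^2 ≤ ∫ x in Ω, (w x - c)^2 :=
    setIntegral_mono_set (cont_intOn hb (hwc.continuous.pow 2))
      (Eventually.of_forall fun x => sq_nonneg _) (perf_subset Ω P r).eventuallyLE
  have h6 : N ≤ ∫ x in perf Ω P r, (u x - c)^2 := by
    rw [int_sub_sq hpb hu.continuous, hmean]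
    have : 0 ≤ c^2 * (volume (perf Ω P r)).toReal := by positivity
    linarith
  have h7 : ∫ x in perf Ω P r, (u x - c)^2 ≤ (1 + τ) * (∫ x in perf Ω P r, (w x - c)^2)
      + (1 + 1 / τ) * ∫ x in perf Ω P r, (w x - u x)^2 := by
    have i1 : IntegrableOn (fun x => (1 + τ) * (w x - c)^2) (perf Ω P r) :=
      cont_intOn hpb ((hwc.continuous.pow 2).const_mul _)
    have i2 : IntegrableOn (fun x => (1 + 1 / τ) * (w x - u x)^2) (perf Ω P r) :=
      cont_intOn hpb (((hw.continuous.sub hu.continuous).pow 2).const_mul _)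
    rw [← integral_const_mul, ← integral_const_mul, ← integral_add i1 i2]
    refine integral_mono (cont_intOn hpb ((hu.continuous.sub continuous_const).pow 2))
      (i1.add i2) fun x => ?_
    show (u x - c)^2 ≤ (1 + τ) * (w x - c)^2 + (1 + 1 / τ) * (w x - u x)^2
    have key : ∀ X Y : ℝ, (X - Y)^2 ≤ (1 + τ) * X^2 + (1 + 1 / τ) * Y^2 := by
      intro X Y
      have e : (1 + τ) * X^2 + (1 + 1 / τ) * Y^2 - (X - Y)^2 = (τ * X + Y)^2 / τ := by
        field_simp; ring
      have : 0 ≤ (τ * X + Y)^2 / τ := by positivity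
      linarith
    have := key (w x - c) (w x - u x)
    calc _ = (w x - c - (w x - u x))^2 := by ring
      _ ≤ _ := this
  set I := ∫ x in Ω, (w x - c)^2
  set D := ∫ x in Ω, ‖fderiv ℝ w x‖^2
  set J := ∫ x in perf Ω P r, (w x - u x)^2
  have hD : D ≤ (1 + τ) * E := by
    have h8 : K * D ≤ K * ((1 + τ) * E) := by
      calc K * D ≤ (K + C) * E := h1
        _ ≤ (K + τ * K) * E := by gcongr
        _ = _ := by ring
    exact le_of_mul_le_mul_left h8 hKr
  have hstep : N ≤ (1 + τ) * I + (1 + 1 / τ) * J := by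
    have : (1 + τ) * (∫ x in perf Ω P r, (w x - c)^2) ≤ (1 + τ) * I :=
      mul_le_mul_of_nonneg_left h5 (by positivity)
    linarith
  exact neu_arith hμ0 hθ0 hθμ hτ0 hτ1 hτθ hAR hE0 hNpos.le hstep (h3.trans hD) h2

open scoped Pointwise

lemma perf_ne {Ω : Set E2} (hne : Ω.Nonempty) {P : Finset E2} {R r : ℝ} (hR : 0 < R) (hrR : r < R)
    (hP : GoodPack Ω P R) : (perf Ω P r).Nonempty := by
  obtain ⟨hPin, hPsep, -⟩ := hP
  rcases P.eq_empty_or_nonempty with rfl | ⟨p, hp⟩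
  · obtain ⟨x, hx⟩ := hne
    exact ⟨x, mem_perf.mpr ⟨hx, by simp⟩⟩
  · have hd : dist (p + R • eang 0) p = R := dist_polar p hR.le 0
    refine ⟨p + R • eang 0, mem_perf.mpr ⟨hPin p hp (Metric.mem_closedBall.mpr hd.le), ?_⟩⟩
    intro q hq
    by_cases hqp : q = p
    · rw [hqp, hd]; exact hrR
    · have h1 := hPsep q hq p hp hqp
      have h2 := dist_triangle q (p + R • eang 0) p
      rw [dist_comm q (p + R • eang 0), hd] at h2
      linarith

lemma perf_mem_diag {Ω : Set E2} (ho : IsOpen Ω) (hne : Ω.Nonempty) (hb : Bornology.IsBounded Ω)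
    {ε : ℝ} (hε : 0 < ε) (hC : ConeProperty Ω ε) {P : Finset E2} {r R : ℝ} (hr : 0 < r)
    (hrR : r < R) (hP : GoodPack Ω P R) :
    ((volume (perf Ω P r)).toReal * dEig1 (perf Ω P r),
      (volume (perf Ω P r)).toReal * nEig1 (perf Ω P r)) ∈ diagE := by
  have hnp := perf_ne hne (hr.trans hrR) hrR hP
  have hop := perf_open ho P r
  have hbp : Bornology.IsBounded (perf Ω P r) := hb.subset (perf_subset Ω P r)
  obtain ⟨t, ht, e, he, hce⟩ := perf_cone ho hε hC P hr hrR hP.1 hP.2.1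
  refine ⟨t • perf Ω P r, hnp.smul_set, hop.smul₀ ht.ne', hbp.smul₀ t, ⟨e, he, hce⟩, ?_⟩
  rw [dEig1_smul hop hnp ht, nEig1_smul hop hnp hbp ht, vol_smul _ ht]
  ext
  · show _ = _
    field_simp
  · show _ = _
    field_simp

lemma perf_vol {Ω : Set E2} (ho : IsOpen Ω) (hb : Bornology.IsBounded Ω) (P : Finset E2) (r : ℝ) :
    (volume Ω).toReal = (volume (perf Ω P r)).toReal + (volume (Ω \ perf Ω P r)).toReal := by
  have hbp : Bornology.IsBounded (perf Ω P r) := hb.subset (perf_subset Ω P r)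
  rw [← ENNReal.toReal_add (vol_lt_top hbp).ne (vol_lt_top (hb.subset sdiff_subset)).ne]
  congr 1
  have h := measure_inter_add_sdiff (μ := volume) Ω (perf_open ho P r).measurableSet
  rw [inter_eq_right.mpr (perf_subset Ω P r)] at h
  exact h.symm

lemma final_arith {V V' l m μ x δ σ : ℝ} (hV : 0 < V) (hV' : 0 ≤ V') (hVle : V' ≤ V)
    (hVge : V - V' ≤ σ * V) (hδ : 0 < δ) (hμ0 : 0 ≤ μ)
    (hx0 : 0 ≤ x) (hσx : σ * x ≤ δ / 2) (hσμ : σ * V * μ ≤ δ / 4)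
    (h1 : x ≤ V * l) (h2 : V * l ≤ x + δ / 2)
    (h3 : m ≤ μ + δ / (4 * V)) (h4 : μ - δ / (4 * V) ≤ m) :
    |x - V' * l| < δ ∧ |V * μ - V' * m| < δ := by
  have hl : 0 ≤ l := by
    by_contra h; push Not at h; nlinarith
  have e1 : V' * l ≤ V * l := mul_le_mul_of_nonneg_right hVle hl
  have hl2 : (1 - σ) * V ≤ V' := by linarith
  have e2 : (1 - σ) * V * l ≤ V' * l := mul_le_mul_of_nonneg_right hl2 hl
  constructor
  · rw [abs_lt]
    refine ⟨by linarith, ?_⟩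
    by_cases hs : σ ≤ 1
    · have : (1 - σ) * x ≤ (1 - σ) * (V * l) := mul_le_mul_of_nonneg_left h1 (by linarith)
      nlinarith
    · push Not at hs
      have h5 : x ≤ σ * x := by nlinarith
      have h6 : 0 ≤ V' * l := mul_nonneg hV' hl
      linarith
  · have hd : V * (δ / (4 * V)) = δ / 4 := by field_simp
    have hd0 : 0 ≤ δ / (4 * V) := by positivity
    have a1 : V' * m ≤ V' * (μ + δ / (4 * V)) := mul_le_mul_of_nonneg_left h3 hV'
    have a2 : V' * (μ - δ / (4 * V)) ≤ V' * m := mul_le_mul_of_nonneg_left h4 hV'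
    have a3 : V' * (δ / (4 * V)) ≤ V * (δ / (4 * V)) := mul_le_mul_of_nonneg_right hVle hd0
    have a4 : V' * μ ≤ V * μ := mul_le_mul_of_nonneg_right hVle hμ0
    have a5 : (V - V') * μ ≤ σ * V * μ := mul_le_mul_of_nonneg_right hVge hμ0
    rw [abs_lt]
    constructor <;> nlinarith

lemma main_approx {Ω : Set E2} (ho : IsOpen Ω) (hne : Ω.Nonempty) (hb : Bornology.IsBounded Ω)
    {x δ : ℝ} (hx : (volume Ω).toReal * dEig1 Ω ≤ x) (hδ : 0 < δ) :
    ∃ (P : Finset E2) (R r : ℝ), 0 < r ∧ r < R ∧ GoodPack Ω P R ∧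
      |x - (volume (perf Ω P r)).toReal * dEig1 (perf Ω P r)| < δ ∧
      |(volume Ω).toReal * nEig1 Ω - (volume (perf Ω P r)).toReal * nEig1 (perf Ω P r)| < δ := by
  have hV := vol_pos ho hne hb
  obtain ⟨V, hVd⟩ : ∃ V, V = (volume Ω).toReal := ⟨_, rfl⟩
  rw [← hVd] at hx hV ⊢
  have hl0 := dEig1_nonneg Ω
  have hμ0 := nEig1_nonneg Ω
  have hx0 : 0 ≤ x := le_trans (by positivity) hx
  have hδ1 : 0 < δ / (4 * V) := by positivity
  obtain ⟨η₂, hη₂, hup⟩ := neu_upper ho hne hb hδ1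
  obtain ⟨K₀, hK₀, R₁, hR₁, hlow⟩ := neu_lower ho hne hb hδ1
  -- the density parameter
  obtain ⟨σ, hσ0, hσV, hσx, hσμ⟩ : ∃ σ : ℝ, 0 < σ ∧ σ * V ≤ η₂ ∧ σ * x ≤ δ / 2 ∧
      σ * V * nEig1 Ω ≤ δ / 4 := by
    have c : ∀ A B : ℝ, 0 < B → ∀ᶠ σ in nhdsWithin (0:ℝ) (Ioi 0), σ * A ≤ B := by
      intro A B hB
      have h1 : Continuous fun σ : ℝ => σ * A := by fun_prop
      have h2 : ∀ᶠ σ in nhds (0:ℝ), σ * A < B := h1.continuousAt.eventually_lt_const (by simpa using hB)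
      exact (h2.filter_mono nhdsWithin_le_nhds).mono fun σ h => h.le
    have := (c V η₂ hη₂).and ((c x (δ / 2) (by positivity)).and
      ((c (V * nEig1 Ω) (δ / 4) (by positivity)).and self_mem_nhdsWithin))
    obtain ⟨σ, h1, h2, h3, h4⟩ := this.exists
    exact ⟨σ, h4, h1, h2, by rw [mul_assoc]; exact h3⟩
  obtain ⟨K₁, hK₁⟩ := exists_pow_lt_of_lt_one hσ0 (show (1/2 : ℝ) < 1 by norm_num)
  obtain ⟨K, hKd⟩ : ∃ K, K = max K₀ K₁ := ⟨_, rfl⟩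
  have hKK : K₀ ≤ K := hKd ▸ le_max_left _ _
  have hK1 : 1 ≤ K := hK₀.trans_le hKK
  obtain ⟨κ, hκd⟩ : ∃ κ : ℝ, κ = (1/2)^K := ⟨_, rfl⟩
  have hκ0 : 0 < κ := by rw [hκd]; positivity
  have hκ2 : κ ≤ 1 / 2 := by
    rw [hκd]
    calc (1/2 : ℝ)^K ≤ (1/2)^1 := pow_le_pow_of_le_one (by norm_num) (by norm_num) hK1
      _ = _ := pow_one _
  have hκσ : κ ≤ σ := by
    rw [hκd]
    exact (pow_le_pow_of_le_one (by norm_num) (by norm_num) (hKd ▸ le_max_right _ _)).trans hK₁.le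
  have hκσ2 : κ^2 ≤ σ := by nlinarith
  obtain ⟨R₂, hR₂, hlarge⟩ := lam_large ho hb hκ0 (by linarith) ((x + δ) / V)
  obtain ⟨R, hRd⟩ : ∃ R, R = min R₁ R₂ := ⟨_, rfl⟩
  have hR : 0 < R := hRd ▸ lt_min hR₁ hR₂
  have hRR₁ : R ≤ R₁ := hRd ▸ min_le_left _ _
  have hRR₂ : R ≤ R₂ := hRd ▸ min_le_right _ _
  obtain ⟨P, hP⟩ := exists_goodPack hb hR
  obtain ⟨η, hη⟩ : ∃ η, η = δ / (2 * (x + 1)) := ⟨_, rfl⟩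
  have hη0 : 0 < η := by rw [hη]; positivity
  have hηx : η * x ≤ δ / 2 := by
    have : η * (x + 1) = δ / 2 := by rw [hη]; field_simp
    nlinarith
  obtain ⟨t, ht0, ht1, hstep⟩ := diffeo_step ho hb hR hP hη0
  obtain ⟨r₀, hr₀, hnear⟩ := lam_near ho hne P (show 0 < δ / (2 * V) by positivity)
  obtain ⟨ρ, hρ⟩ : ∃ ρ : ℕ → ℝ, ρ = fun k => κ * R * (1 - t)^k := ⟨_, rfl⟩
  have hρ0 : ∀ k, 0 < ρ k := fun k => by
    rw [hρ]
    have : 0 < 1 - t := by linarith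
    positivity
  have hρle : ∀ k, ρ k ≤ κ * R := fun k => by
    rw [hρ]
    have : (1 - t)^k ≤ 1 := pow_le_one₀ (by linarith) (by linarith)
    have h2 : 0 < κ * R := by positivity
    simp only
    nlinarith
  have hρs : ∀ k, ρ (k + 1) = (1 - t) * ρ k := fun k => by
    rw [hρ]; simp only; ring
  have hκR : κ * R ≤ R / 2 := by nlinarith
  have hρR : ∀ k, ρ k < R := fun k => by have := hρle k; linarith
  have hex : ∃ k, V * dEig1 (perf Ω P (ρ k)) ≤ x + δ / 2 := by
    obtain ⟨k, hk⟩ := exists_pow_lt_of_lt_one (show 0 < r₀ / (κ * R) by positivity)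
      (show 1 - t < 1 by linarith)
    refine ⟨k, ?_⟩
    have h1 : ρ k < r₀ := by
      rw [lt_div_iff₀ (by positivity)] at hk
      rw [hρ]; simp only; linarith
    have h2 := hnear (ρ k) h1
    have h3 : V * dEig1 (perf Ω P (ρ k)) ≤ V * (dEig1 Ω + δ / (2 * V)) :=
      mul_le_mul_of_nonneg_left h2 hV.le
    have h4 : V * (dEig1 Ω + δ / (2 * V)) = V * dEig1 Ω + δ / 2 := by field_simp
    linarith
  classical
  obtain ⟨k, hk, hkmin⟩ : ∃ k, V * dEig1 (perf Ω P (ρ k)) ≤ x + δ / 2 ∧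
      ∀ j < k, x + δ / 2 < V * dEig1 (perf Ω P (ρ j)) :=
    ⟨Nat.find hex, Nat.find_spec hex, fun j hj => not_le.mp (Nat.find_min hex hj)⟩
  have hk0 : k ≠ 0 := by
    rintro rfl
    have e : ρ 0 = κ * R := by rw [hρ]; simp
    rw [e] at hk
    have h1 := hlarge R hR hRR₂ P hP (perf_ne hne hR (by linarith) hP)
    rw [div_le_iff₀ hV] at h1
    linarith
  obtain ⟨j, rfl⟩ := Nat.exists_eq_succ_of_ne_zero hk0
  have hj := hkmin j (Nat.lt_succ_self j)
  have hst := hstep (ρ j) (hρ0 j) ((hρle j).trans hκR) (perf_ne hne hR (hρR j) hP)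
  rw [← hρs] at hst
  have hxl : x ≤ V * dEig1 (perf Ω P (ρ (j + 1))) := by
    have h1 : V * dEig1 (perf Ω P (ρ j)) ≤ V * ((1 + η) * dEig1 (perf Ω P (ρ (j + 1)))) :=
      mul_le_mul_of_nonneg_left hst hV.le
    have h2 : x * (1 + η) ≤ (V * dEig1 (perf Ω P (ρ (j + 1)))) * (1 + η) := by nlinarith
    exact le_of_mul_le_mul_right h2 (by linarith)
  have harea : (volume (Ω \ perf Ω P (ρ (j + 1)))).toReal ≤ σ * V := by
    refine (hole_area hb (hρ0 _).le hR hP).trans ?_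
    rw [← hVd]
    have h1 : ρ (j + 1) / R ≤ κ := by rw [div_le_iff₀ hR]; exact hρle _
    have h2 : (ρ (j + 1) / R)^2 ≤ κ^2 :=
      pow_le_pow_left₀ (div_nonneg (hρ0 _).le hR.le) h1 2
    exact mul_le_mul_of_nonneg_right (h2.trans hκσ2) hV.le
  have hvol := perf_vol ho hb P (ρ (j + 1))
  rw [← hVd] at hvol
  have hnp := perf_ne hne hR (hρR (j + 1)) hP
  have hu := hup (perf Ω P (ρ (j + 1))) (perf_open ho P _) (perf_subset Ω P _) (harea.trans hσV)
  have hlo := hlow K hKK R hR hRR₁ P hP (ρ (j + 1)) (hρ0 _) (by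
    refine (hρle _).trans_eq ?_
    rw [hκd, one_div, inv_pow]; field_simp) hnp
  refine ⟨P, R, ρ (j + 1), hρ0 _, hρR _, hP, ?_⟩
  have hv0 : 0 ≤ (volume (Ω \ perf Ω P (ρ (j + 1)))).toReal := ENNReal.toReal_nonneg
  exact final_arith hV ENNReal.toReal_nonneg (by linarith) (by linarith) hδ hμ0 hx0 hσx hσμ hxl hk
    hu hlo

/-- If `(x₀, y₀)` belongs to the diagram `𝓔`, then the whole horizontal half-line
`{(x, y₀) : x ≥ x₀}` is contained in the closure of `𝓔`. -/
theorem halfline_in_closure (x₀ y₀ : ℝ) (h : (x₀, y₀) ∈ diagE) :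
    { p : ℝ × ℝ | p.2 = y₀ ∧ x₀ ≤ p.1 } ⊆ closure diagE := by
  obtain ⟨Ω, hne, ho, hb, ⟨ε, hε, hC⟩, heq⟩ := h
  rw [Prod.mk.injEq] at heq
  obtain ⟨hx0, hy0⟩ := heq
  rintro ⟨x, y⟩ ⟨hy, hx⟩
  simp only at hy hx
  rw [Metric.mem_closure_iff]
  intro δ hδ
  obtain ⟨P, R, r, hr, hrR, hP, h1, h2⟩ := main_approx ho hne hb (hx0 ▸ hx) hδ
  refine ⟨_, perf_mem_diag ho hne hb hε hC hr hrR hP, ?_⟩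
  rw [Prod.dist_eq, max_lt_iff]
  constructor
  · exact h1
  · show |y - _| < δ
    rw [hy, hy0]; exact h2
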